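/- arXiv:1911.01029 — 2 statements merged into one kernel-verified Lean document; each statement's English description precedes it below -/
import Mathlib

section
/- For each fixed real y ≥ 1 there exist constants C > 0 and c > 0 (depending only on y) such that for all x ≥ 2, |∑_{1 ≤ n ≤ x, every prime factor of n exceeds y} μ(n)/n| ≤ C·exp(−c·√(log x)). -/
open Finset

/-!
The theorem is the prime number theorem for `∑ μ(n) / n` with the classical error term, together with
an elementary sieve by the finitely many primes `p ≤ y`.

**Zero-free region.** Put `Z s = (s - 1) ζ(s)`, continued to `Re s > 0`. Landau's lemma
(`landau_re`, `landau_re_zero`) bounds `Re (Z'/Z)` from below by the growth of `Z` on a disc, and keeps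
the contribution of a given zero; its proof divides out zeros one at a time and applies the
Borel–Carathéodory inequality to a logarithm of the remaining function. Combined with
`3 + 4 cos θ + cos 2θ ≥ 0` this yields the de la Vallée Poussin region (`zero_free`), and a second
application of Borel–Carathéodory turns it into a uniform bound `|Z s| ≥ m > 0` for
`Re s ≥ 1 - c / log (|Im s| + 4)` (`Z_lower`).

**Perron.** For the weight `max (1 - n / x) 0`, Mellin inversion gives
`∑ n ≤ x, μ(n) / n * (1 - n / x) = (1 / 2πi) ∫ x^s / ((s + 1) Z (1 + s)) ds` (`perron`). Shifting the
line of integration to `Re s = -c / log (T + 4)` up to height `T = exp (c' √(log x))` bounds this sum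
by `O(exp (-c'' √(log x)))` (`smooth_bound`), and comparing the values at `x` and at
`x + h` for a suitable `h` removes the weight (`moebius_div_sum_bound`).

**Sieve.** If `S P x` denotes the sum over `n ≤ x` divisible by no prime of `P`, then
`S (P ∪ {p}) x = S P x + S (P ∪ {p}) (x / p) / p`. Since `√(log (x / p)) ≥ √(log x) - √(log p)` and
`p⁻¹ exp (c √(log p)) ≤ 3 / 4` for `c ≤ 1 / 4`, the bound passes from `P` to `P ∪ {p}` with the same
`c` (`S_insert_bound`); induction over the primes `p ≤ y` concludes.
-/

/-! ### Landau's lemma on the logarithmic derivative -/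

namespace RoughMoebius

open Complex Metric

/-- A holomorphic logarithm on a zero-free disc, with the bound given by the Borel–Carathéodory
inequality. -/
lemma exists_log_bound {f : ℂ → ℂ} {M R : ℝ} (hM : 0 < M) (hR : 0 < R)
    (hf : DifferentiableOn ℂ f (ball 0 R)) (hne : ∀ z ∈ ball (0 : ℂ) R, f z ≠ 0)
    (hb : ∀ z ∈ ball (0 : ℂ) R, ‖f z‖ ≤ Real.exp M * ‖f 0‖) :
    ∃ h : ℂ → ℂ, DifferentiableOn ℂ h (ball 0 R) ∧ (∀ z ∈ ball (0 : ℂ) R, f z = f 0 * exp (h z)) ∧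
      ∀ z ∈ ball (0 : ℂ) R, ‖h z‖ ≤ 2 * M * ‖z‖ / (R - ‖z‖) := by
  have h0 : (0 : ℂ) ∈ ball (0 : ℂ) R := mem_ball_self hR
  have hlog : DifferentiableOn ℂ (fun z => deriv f z / f z) (ball 0 R) :=
    (hf.deriv isOpen_ball).div hf hne
  obtain ⟨h, h00, hh⟩ := hlog.isExactOn_ball.with_val_at 0 0
  have hdh : DifferentiableOn ℂ h (ball 0 R) :=
    fun z hz => (hh z hz).differentiableAt.differentiableWithinAt
  have heq : ∀ z ∈ ball (0 : ℂ) R, f z = f 0 * exp (h z) := by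
    have hconst : ∀ z ∈ ball (0 : ℂ) R, f z * exp (-h z) = f 0 * exp (-h 0) := by
      intro z hz
      have hd : ∀ w ∈ ball (0 : ℂ) R, HasDerivAt (fun w => f w * exp (-h w)) 0 w := by
        intro w hw
        have h1 : HasDerivAt f (deriv f w) w :=
          (hf.differentiableAt (isOpen_ball.mem_nhds hw)).hasDerivAt
        have h2 := h1.mul ((hh w hw).neg.cexp)
        refine h2.congr_deriv ?_
        have := hne w hw
        simp only [Pi.neg_apply]
        field_simp
        ring
      refine (convex_ball (0 : ℂ) R).is_const_of_fderivWithin_eq_zero (𝕜 := ℂ)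
        (fun w hw => (hd w hw).differentiableAt.differentiableWithinAt) ?_ hz h0
      intro w hw
      rw [fderivWithin_of_isOpen isOpen_ball hw]
      ext
      simp [(hd w hw).hasFDerivAt.fderiv]
    intro z hz
    have := hconst z hz
    rw [h00, neg_zero, exp_zero, mul_one] at this
    rw [← this, mul_assoc, ← exp_add]
    simp
  refine ⟨h, hdh, heq, fun z hz => borelCaratheodory_zero hM hdh ?_ hR hz h00⟩
  intro w hw
  have h1 := hb w hw
  rw [heq w hw, norm_mul, norm_exp, mul_comm (Real.exp M)] at h1
  have h2 : Real.exp (h w).re ≤ Real.exp M :=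
    le_of_mul_le_mul_left h1 (norm_pos_iff.mpr (hne 0 h0))
  exact Real.exp_le_exp.mp h2

/-- Dividing out a zero `ρ` close to the centre preserves a growth bound relative to the value at the
centre, and even improves it by a factor `3`: on `|z| = 1/2` one has `|z - ρ| ≥ 3/8 ≥ 3 |ρ|`, and
the maximum principle does the rest. -/
lemma dslope_bound {f : ℂ → ℂ} {B : ℝ} {ρ : ℂ} (hB : 0 ≤ B)
    (hf : DifferentiableOn ℂ f (ball 0 1))
    (hb : ∀ z ∈ closedBall (0 : ℂ) (1 / 2), ‖f z‖ ≤ B * ‖f 0‖)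
    (hρ : ‖ρ‖ < 1 / 8) (hfρ : f ρ = 0) :
    ∀ z ∈ closedBall (0 : ℂ) (1 / 2), ‖dslope f ρ z‖ ≤ B / 3 * ‖dslope f ρ 0‖ := by
  have hfac : ∀ z, f z = (z - ρ) * dslope f ρ z := by
    intro z
    have := sub_smul_dslope f ρ z
    rw [hfρ, sub_zero, smul_eq_mul] at this
    exact this.symm
  have hd : DifferentiableOn ℂ (dslope f ρ) (ball 0 1) :=
    (differentiableOn_dslope (isOpen_ball.mem_nhds (by simp; linarith))).mpr hf
  have hcl : closure (ball (0 : ℂ) (1 / 2)) = closedBall 0 (1 / 2) := closure_ball _ (by norm_num)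
  intro z hz
  refine norm_le_of_forall_mem_frontier_norm_le (U := ball (0 : ℂ) (1 / 2)) isBounded_ball ?_ ?_
    (hcl ▸ hz)
  · refine DifferentiableOn.diffContOnCl ?_
    rw [hcl]
    exact hd.mono (closedBall_subset_ball (by norm_num))
  · intro w hw
    rw [frontier_ball _ (by norm_num)] at hw
    have hw' : ‖w‖ = 1 / 2 := by simpa using hw
    have h1 := hb w (sphere_subset_closedBall hw)
    rw [hfac w, hfac 0, norm_mul, norm_mul, zero_sub, norm_neg] at h1
    have h2 : 3 / 8 ≤ ‖w - ρ‖ := by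
      have := norm_sub_norm_le w ρ
      linarith
    have h3 := norm_nonneg (dslope f ρ w)
    have h4 : B * (‖ρ‖ * ‖dslope f ρ 0‖) ≤ B * (1 / 8 * ‖dslope f ρ 0‖) := by gcongr
    nlinarith

/-- The logarithmic derivative at `0` splits off the contribution `-1 / ρ` of a zero `ρ`. -/
lemma deriv_div_dslope {f : ℂ → ℂ} {ρ : ℂ} (hf : DifferentiableOn ℂ f (ball 0 1)) (h0 : f 0 ≠ 0)
    (hρ : ‖ρ‖ < 1 / 8) (hfρ : f ρ = 0) :
    deriv f 0 / f 0 = -1 / ρ + deriv (dslope f ρ) 0 / dslope f ρ 0 := by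
  have hfac : ∀ z, f z = (z - ρ) * dslope f ρ z := by
    intro z
    have := sub_smul_dslope f ρ z
    rw [hfρ, sub_zero, smul_eq_mul] at this
    exact this.symm
  have hd : DifferentiableOn ℂ (dslope f ρ) (ball 0 1) :=
    (differentiableOn_dslope (isOpen_ball.mem_nhds (by simp; linarith))).mpr hf
  have hd0 : HasDerivAt (dslope f ρ) (deriv (dslope f ρ) 0) 0 :=
    (hd.differentiableAt (isOpen_ball.mem_nhds (by simp))).hasDerivAt
  have h1 : HasDerivAt f (1 * dslope f ρ 0 + (0 - ρ) * deriv (dslope f ρ) 0) 0 := by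
    have := ((hasDerivAt_id (0 : ℂ)).sub_const ρ).mul hd0
    refine this.congr_of_eventuallyEq (Filter.Eventually.of_forall fun z => ?_)
    simpa using hfac z
  have hρ0 : ρ ≠ 0 := by rintro rfl; exact h0 hfρ
  have hg0 : dslope f ρ 0 ≠ 0 := by
    intro h
    apply h0
    rw [hfac 0, h, mul_zero]
  rw [h1.deriv, hfac 0]
  field_simp
  ring

/-- Landau's lower bound for the real part of the logarithmic derivative, by induction on the number of
zeros: each zero divided out lowers the exponent `n` in the growth bound `3 ^ n`, so that the process
stops, and a zero with nonpositive real part contributes a nonnegative amount. A function bounded by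
its value at the centre (`n = 0`) is constant; a zero-free function is handled by
`exists_log_bound`. -/
lemma landau_aux {M : ℝ} (hM : 0 < M) (n : ℕ) : ∀ f : ℂ → ℂ, DifferentiableOn ℂ f (ball 0 1) →
    f 0 ≠ 0 → (∀ z ∈ closedBall (0 : ℂ) (1 / 2), ‖f z‖ ≤ Real.exp M * ‖f 0‖) →
    (∀ z ∈ closedBall (0 : ℂ) (1 / 2), ‖f z‖ ≤ 3 ^ n * ‖f 0‖) →
    (∀ z ∈ ball (0 : ℂ) (1 / 8), f z = 0 → z.re ≤ 0) → -(32 * M) ≤ (deriv f 0 / f 0).re := by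
  induction n with
  | zero =>
    intro f hf h0 hb hn hz
    have hc : deriv f 0 = 0 := by
      have hmax : IsLocalMax (norm ∘ f) 0 := by
        filter_upwards [closedBall_mem_nhds (0 : ℂ) (show (0 : ℝ) < 1 / 2 by norm_num)] with z hz
        simpa using hn z hz
      have hev : f =ᶠ[nhds 0] fun _ => f 0 := by
        refine eventually_eq_of_isLocalMax_norm ?_ hmax
        filter_upwards [isOpen_ball.mem_nhds (show (0 : ℂ) ∈ ball (0 : ℂ) 1 by simp)] with z hz
        exact hf.differentiableAt (isOpen_ball.mem_nhds hz)
      rw [hev.deriv_eq]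
      simp
    rw [hc]
    simp
    positivity
  | succ n ih =>
    intro f hf h0 hb hn hz
    by_cases hex : ∃ ρ ∈ ball (0 : ℂ) (1 / 8), f ρ = 0
    · obtain ⟨ρ, hρ, hfρ⟩ := hex
      have hρre := hz ρ hρ hfρ
      have hρ' : ‖ρ‖ < 1 / 8 := by simpa using hρ
      have hfac : ∀ z, f z = (z - ρ) * dslope f ρ z := by
        intro z
        have := sub_smul_dslope f ρ z
        rw [hfρ, sub_zero, smul_eq_mul] at this
        exact this.symm
      rw [deriv_div_dslope hf h0 hρ' hfρ, add_re]
      have h1 : 0 ≤ (-1 / ρ).re := by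
        rw [div_re]
        simp
        exact div_nonneg (by linarith) (normSq_nonneg _)
      have h2 := ih (dslope f ρ)
        ((differentiableOn_dslope (isOpen_ball.mem_nhds (by simp; linarith))).mpr hf)
        (fun h => h0 (by rw [hfac 0, h, mul_zero]))
        (fun z hz' => (dslope_bound (Real.exp_pos M).le hf hb hρ' hfρ z hz').trans
          (by gcongr; linarith [Real.exp_pos M]))
        (fun z hz' => (dslope_bound (by positivity) hf hn hρ' hfρ z hz').trans
          (by gcongr; rw [pow_succ]; linarith))
        (fun z hz' h => hz z hz' (by rw [hfac z, h, mul_zero]))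
      linarith
    · push Not at hex
      obtain ⟨h, hdh, heq, hbd⟩ := exists_log_bound (f := f) (M := M) (R := 1 / 8) hM (by norm_num)
        (hf.mono (ball_subset_ball (by norm_num))) hex
        (fun z hz' => hb z (ball_subset_closedBall (ball_subset_ball (by norm_num) hz')))
      have hm : (0 : ℂ) ∈ ball (0 : ℂ) (1 / 8) := by simp
      have hd0 : HasDerivAt h (deriv h 0) 0 :=
        (hdh.differentiableAt (isOpen_ball.mem_nhds hm)).hasDerivAt
      have hh0 : h 0 = 0 := by
        have := hbd 0 hm
        simpa using this
      have hdf : deriv f 0 / f 0 = deriv h 0 := by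
        have h1 : HasDerivAt f (f 0 * (exp (h 0) * deriv h 0)) 0 := by
          refine (hd0.cexp.const_mul (f 0)).congr_of_eventuallyEq ?_
          filter_upwards [isOpen_ball.mem_nhds hm] with z hz' using heq z hz'
        rw [h1.deriv, hh0]
        simp
        field_simp
      rw [hdf]
      have h3 : ‖deriv h 0‖ ≤ 2 * M / (1 / 16) := by
        refine norm_deriv_le_of_forall_mem_sphere_norm_le (by norm_num) ?_ ?_
        · refine DifferentiableOn.diffContOnCl ?_
          rw [closure_ball _ (by norm_num)]
          exact hdh.mono (closedBall_subset_ball (by norm_num))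
        · intro z hz'
          have hz1 : ‖z‖ = 1 / 16 := by simpa using hz'
          have := hbd z (by simp [hz1]; norm_num)
          rw [hz1] at this
          refine this.trans (le_of_eq ?_)
          ring
      have h4 := abs_re_le_norm (deriv h 0)
      have h5 := neg_abs_le (deriv h 0).re
      linarith

/-- Landau's lemma: if `f` grows by at most a factor `exp M` from the centre and its zeros near the
centre lie in the left half-plane, then `Re (f' / f) (0) ≥ -32 M`. -/
lemma landau_re {M : ℝ} (hM : 0 < M) {f : ℂ → ℂ} (hf : DifferentiableOn ℂ f (ball 0 1))
    (h0 : f 0 ≠ 0) (hb : ∀ z ∈ closedBall (0 : ℂ) (1 / 2), ‖f z‖ ≤ Real.exp M * ‖f 0‖)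
    (hz : ∀ z ∈ ball (0 : ℂ) (1 / 8), f z = 0 → z.re ≤ 0) :
    -(32 * M) ≤ (deriv f 0 / f 0).re := by
  obtain ⟨n, hn⟩ := pow_unbounded_of_one_lt (Real.exp M) (show (1 : ℝ) < 3 by norm_num)
  exact landau_aux hM n f hf h0 hb (fun z hz' => (hb z hz').trans (by gcongr)) hz

/-- Landau's lemma with the contribution of one given zero kept. -/
lemma landau_re_zero {M : ℝ} (hM : 0 < M) {f : ℂ → ℂ} (hf : DifferentiableOn ℂ f (ball 0 1))
    (h0 : f 0 ≠ 0) (hb : ∀ z ∈ closedBall (0 : ℂ) (1 / 2), ‖f z‖ ≤ Real.exp M * ‖f 0‖)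
    (hz : ∀ z ∈ ball (0 : ℂ) (1 / 8), f z = 0 → z.re ≤ 0) {ρ : ℂ} (hρ : ‖ρ‖ < 1 / 8)
    (hfρ : f ρ = 0) :
    -(32 * M) + (-1 / ρ).re ≤ (deriv f 0 / f 0).re := by
  have hfac : ∀ z, f z = (z - ρ) * dslope f ρ z := by
    intro z
    have := sub_smul_dslope f ρ z
    rw [hfρ, sub_zero, smul_eq_mul] at this
    exact this.symm
  rw [deriv_div_dslope hf h0 hρ hfρ, add_re]
  have h2 := landau_re hM (f := dslope f ρ)
    ((differentiableOn_dslope (isOpen_ball.mem_nhds (by simp; linarith))).mpr hf)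
    (fun h => h0 (by rw [hfac 0, h, mul_zero]))
    (fun z hz' => (dslope_bound (Real.exp_pos M).le hf hb hρ hfρ z hz').trans
      (by gcongr; linarith [Real.exp_pos M]))
    (fun z hz' h => hz z hz' (by rw [hfac z, h, mul_zero]))
  linarith

end RoughMoebius

/-! ### The function `(s - 1) ζ(s)` -/

namespace RoughMoebius

open Complex Metric MeasureTheory

/-- The integral `∫_1^∞ {t} t^(-s-1) dt`, which converges for `Re s > 0`. -/
noncomputable def zH (s : ℂ) : ℂ :=
  ∫ t in Set.Ioi (1 : ℝ), ((Int.fract t : ℝ) : ℂ) * (t : ℂ) ^ (-(s + 1))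

/-- The function `(s - 1) ζ(s)`, in the form which is visibly holomorphic on `Re s > 0`. Working with
`Z` avoids the junk value of `riemannZeta` at its pole. -/
noncomputable def Z (s : ℂ) : ℂ := s - s * (s - 1) * zH s

lemma zH_eq_mellin (s : ℂ) :
    zH s = mellin ((Set.Ioi (1 : ℝ)).indicator fun t => ((Int.fract t : ℝ) : ℂ)) (-s) := by
  unfold zH mellin
  have h : ∀ t : ℝ, (t : ℂ) ^ (-s - 1) • (Set.Ioi (1 : ℝ)).indicator
      (fun t => ((Int.fract t : ℝ) : ℂ)) t = (Set.Ioi (1 : ℝ)).indicator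
      (fun t => ((Int.fract t : ℝ) : ℂ) * (t : ℂ) ^ (-(s + 1))) t := by
    intro t
    by_cases ht : t ∈ Set.Ioi (1 : ℝ)
    · rw [Set.indicator_of_mem ht, Set.indicator_of_mem ht, smul_eq_mul, mul_comm]
      ring_nf
    · rw [Set.indicator_of_notMem ht, Set.indicator_of_notMem ht, smul_zero]
  simp_rw [h]
  rw [setIntegral_indicator measurableSet_Ioi]
  congr 2
  ext t
  simp only [Set.mem_inter_iff, Set.mem_Ioi]
  exact ⟨fun h => ⟨by linarith, h⟩, fun h => h.2⟩

lemma zH_differentiableAt {s : ℂ} (hs : 0 < s.re) : DifferentiableAt ℂ zH s := by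
  have h : zH = fun s =>
      mellin ((Set.Ioi (1 : ℝ)).indicator fun t => ((Int.fract t : ℝ) : ℂ)) (-s) := by
    ext s
    exact zH_eq_mellin s
  rw [h]
  have hbd : ∀ t : ℝ, ‖(Set.Ioi (1 : ℝ)).indicator (fun t => ((Int.fract t : ℝ) : ℂ)) t‖ ≤ 1 := by
    intro t
    refine (norm_indicator_le_norm_self _ _).trans ?_
    rw [norm_real, Real.norm_of_nonneg (Int.fract_nonneg t)]
    exact (Int.fract_lt_one t).le
  have hmeas : Measurable ((Set.Ioi (1 : ℝ)).indicator (fun t => ((Int.fract t : ℝ) : ℂ))) :=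
    (measurable_ofReal.comp measurable_fract).indicator measurableSet_Ioi
  have hm := mellin_differentiableAt_of_isBigO_rpow (a := 0) (b := -s.re - 1) (s := -s)
    (f := (Set.Ioi (1 : ℝ)).indicator fun t => ((Int.fract t : ℝ) : ℂ)) ?_ ?_ ?_ ?_ ?_
  · exact hm.comp s differentiable_neg.differentiableAt
  · refine LocallyIntegrable.locallyIntegrableOn ?_ _
    refine (locallyIntegrable_const (1 : ℝ)).mono hmeas.aestronglyMeasurable ?_
    filter_upwards with t
    simpa using hbd t
  · refine Asymptotics.IsBigO.of_bound 1 ?_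
    filter_upwards with t
    simpa using hbd t
  · simpa using hs
  · refine Asymptotics.IsBigO.of_bound 1 ?_
    have : Set.Iio (1 : ℝ) ∈ nhdsWithin (0 : ℝ) (Set.Ioi 0) :=
      mem_nhdsWithin_of_mem_nhds (Iio_mem_nhds one_pos)
    filter_upwards [this] with t ht
    rw [Set.indicator_of_notMem (by simpa using (le_of_lt ht))]
    simp
  · simp

lemma norm_zH_le {s : ℂ} (hs : 0 < s.re) : ‖zH s‖ ≤ 1 / s.re := by
  have h1 : ∫ t in Set.Ioi (1 : ℝ), t ^ (-(s.re + 1)) = 1 / s.re := by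
    rw [integral_Ioi_rpow_of_lt (by linarith) one_pos]
    simp
  rw [← h1]
  refine norm_integral_le_of_norm_le (integrableOn_Ioi_rpow_of_lt (by linarith) one_pos) ?_
  filter_upwards [ae_restrict_mem measurableSet_Ioi] with t ht
  have ht0 : (0 : ℝ) < t := zero_lt_one.trans ht
  rw [norm_mul, norm_real, Real.norm_of_nonneg (Int.fract_nonneg t), norm_cpow_eq_rpow_re_of_pos ht0]
  have : (-(s + 1)).re = -(s.re + 1) := by simp
  rw [this]
  exact mul_le_of_le_one_left (by positivity) (Int.fract_lt_one t).le

lemma Z_differentiableAt {s : ℂ} (hs : 0 < s.re) : DifferentiableAt ℂ Z s := by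
  have := zH_differentiableAt hs
  unfold Z
  fun_prop

lemma Z_one : Z 1 = 1 := by simp [Z]

lemma Z_eq_of_one_lt {s : ℂ} (hs : 1 < s.re) : Z s = (s - 1) * riemannZeta s := by
  have hs0 : s - 1 ≠ 0 := by
    intro h
    rw [sub_eq_zero] at h
    rw [h] at hs
    simp at hs
  have hL := LSeries_eq_mul_integral (f := 1) (r := 1) zero_le_one (s := s) hs
    (LSeriesSummable_one_iff.mpr hs) ?_
  · rw [LSeries_one_eq_riemannZeta hs] at hL
    have h2 : ∫ t in Set.Ioi (1 : ℝ), (∑ k ∈ Icc 1 ⌊t⌋₊, (1 : ℕ → ℂ) k) * (t : ℂ) ^ (-(s + 1)) =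
        ∫ t in Set.Ioi (1 : ℝ), ((t : ℂ) ^ (-s) -
          ((Int.fract t : ℝ) : ℂ) * (t : ℂ) ^ (-(s + 1))) := by
      refine setIntegral_congr_fun measurableSet_Ioi fun t ht => ?_
      have ht0 : (0 : ℝ) < t := zero_lt_one.trans ht
      have htc : (t : ℂ) ≠ 0 := by exact_mod_cast ht0.ne'
      simp only [Pi.one_apply, sum_const, Nat.card_Icc, add_tsub_cancel_right, nsmul_eq_mul, mul_one]
      have e1 : ((⌊t⌋₊ : ℕ) : ℂ) = (t : ℂ) - ((Int.fract t : ℝ) : ℂ) := by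
        have : ((⌊t⌋₊ : ℕ) : ℝ) = t - Int.fract t := by
          rw [Int.self_sub_fract, natCast_floor_eq_intCast_floor ht0.le]
        exact_mod_cast congrArg (fun x : ℝ => (x : ℂ)) this
      have e2 : (t : ℂ) ^ (-s) = t * (t : ℂ) ^ (-(s + 1)) := by
        rw [show -s = 1 + -(s + 1) by ring, cpow_add _ _ htc, cpow_one]
      rw [e1, e2]
      ring
    have hfract : IntegrableOn (fun t : ℝ => ((Int.fract t : ℝ) : ℂ) * (t : ℂ) ^ (-(s + 1)))
        (Set.Ioi 1) := by
      have hi : IntegrableOn (fun t : ℝ => (t : ℂ) ^ (-(s + 1))) (Set.Ioi 1) :=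
        integrableOn_Ioi_cpow_of_lt (by simp; linarith) one_pos
      refine Integrable.bdd_mul (c := 1) hi
        (measurable_ofReal.comp measurable_fract).aestronglyMeasurable ?_
      filter_upwards with t
      rw [norm_real, Real.norm_of_nonneg (Int.fract_nonneg t)]
      exact (Int.fract_lt_one t).le
    rw [h2, integral_sub (integrableOn_Ioi_cpow_of_lt (by simpa using hs) one_pos) hfract,
      integral_Ioi_cpow_of_lt (by simpa using hs) one_pos] at hL
    rw [hL, Z]
    change _ = (s - 1) * (s * (_ - zH s))
    have : -s + 1 ≠ 0 := by
      intro h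
      apply hs0
      linear_combination -h
    simp
    field_simp
    ring
  · refine Asymptotics.IsBigO.of_bound 1 ?_
    filter_upwards with n
    simp

lemma Z_continuousOn : ContinuousOn Z {s | 0 < s.re} :=
  fun _ hs => (Z_differentiableAt hs).continuousAt.continuousWithinAt

lemma Z_eq_of_one_le {s : ℂ} (hs : 1 ≤ s.re) (h1 : s ≠ 1) : Z s = (s - 1) * riemannZeta s := by
  have hcont1 : ContinuousAt Z s := (Z_differentiableAt (by linarith)).continuousAt
  have hcont2 : ContinuousAt (fun s => (s - 1) * riemannZeta s) s :=
    ((differentiableAt_id.sub_const 1).mul (differentiableAt_riemannZeta h1)).continuousAt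
  have hpath : Filter.Tendsto (fun u : ℝ => s + u) (nhdsWithin 0 (Set.Ioi 0)) (nhds s) := by
    have : ContinuousAt (fun u : ℝ => s + u) 0 := by fun_prop
    have h := this.tendsto
    simp only [ofReal_zero, add_zero] at h
    exact h.mono_left nhdsWithin_le_nhds
  refine tendsto_nhds_unique (hcont1.tendsto.comp hpath) ?_
  refine (hcont2.tendsto.comp hpath).congr' ?_
  filter_upwards [self_mem_nhdsWithin] with u hu
  have hu : (0 : ℝ) < u := hu
  simp only [Function.comp]
  rw [Z_eq_of_one_lt (by simp; linarith)]

lemma Z_ne_zero {s : ℂ} (hs : 1 ≤ s.re) : Z s ≠ 0 := by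
  by_cases h : s = 1
  · rw [h, Z_one]
    exact one_ne_zero
  · rw [Z_eq_of_one_le hs h]
    exact mul_ne_zero (sub_ne_zero.mpr h) (riemannZeta_ne_zero_of_one_le_re hs)

lemma norm_Z_le {s : ℂ} (hs : 1 / 2 ≤ s.re) : ‖Z s‖ ≤ ‖s‖ + 2 * (‖s‖ * ‖s - 1‖) := by
  have h := norm_zH_le (s := s) (by linarith)
  have h2 : 1 / s.re ≤ 2 := by
    rw [div_le_iff₀ (by linarith)]
    linarith
  unfold Z
  refine (norm_sub_le _ _).trans ?_
  rw [norm_mul, norm_mul]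
  nlinarith [norm_nonneg s, mul_nonneg (norm_nonneg s) (norm_nonneg (s - 1))]

/-- From `1 / ζ(s) = ∑ μ(n) n^(-s)` one gets `|1 / ζ(s)| ≤ ζ(Re s) ≤ 3 / (Re s - 1)`. -/
lemma norm_zeta_ge {s : ℂ} (hs : 1 < s.re) (hs2 : s.re ≤ 2) :
    (s.re - 1) / 3 ≤ ‖riemannZeta s‖ ∧ ‖riemannZeta s‖⁻¹ ≤ 3 / (s.re - 1) := by
  have hz : riemannZeta s ≠ 0 := riemannZeta_ne_zero_of_one_lt_re hs
  have hσ : 1 < (s.re : ℂ).re := by simpa using hs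
  have hinv : (riemannZeta s)⁻¹ = LSeries (fun n => ((ArithmeticFunction.moebius n : ℤ) : ℂ)) s := by
    have := ArithmeticFunction.LSeries_zeta_mul_Lseries_moebius hs
    rw [ArithmeticFunction.LSeries_zeta_eq_riemannZeta hs] at this
    exact inv_eq_of_mul_eq_one_right this
  have hle : ‖(riemannZeta s)⁻¹‖ ≤ ‖riemannZeta (s.re : ℂ)‖ := by
    have hsum : Summable fun n : ℕ => LSeries.term 1 (s.re : ℂ) n := LSeriesSummable_one_iff.mpr hσ
    have e : ∀ n, LSeries.term 1 (s.re : ℂ) n = ((‖LSeries.term 1 s n‖ : ℝ) : ℂ) := by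
      intro n
      rw [LSeries.norm_term_eq, LSeries.term_def]
      split_ifs with h
      · simp
      · simp [ofReal_cpow]
    have hreal : Summable fun n : ℕ => ‖LSeries.term 1 s n‖ := (LSeriesSummable_one_iff.mpr hs).norm
    have hval : riemannZeta (s.re : ℂ) = ((∑' n, ‖LSeries.term 1 s n‖ : ℝ) : ℂ) := by
      rw [← LSeries_one_eq_riemannZeta hσ, LSeries, tsum_congr e, ofReal_tsum]
    rw [hinv, hval, norm_real, Real.norm_of_nonneg (tsum_nonneg fun n => norm_nonneg _), LSeries]
    refine tsum_of_norm_bounded hreal.hasSum fun n => ?_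
    refine LSeries.norm_term_le s ?_
    simp only [Pi.one_apply, norm_one]
    have h1 := ArithmeticFunction.abs_moebius_le_one (n := n)
    have h2 : ‖((ArithmeticFunction.moebius n : ℤ) : ℂ)‖ = |((ArithmeticFunction.moebius n : ℤ) : ℝ)| := by
      rw [← norm_intCast]
    rw [h2]
    exact_mod_cast h1
  have hZ : ‖Z (s.re : ℂ)‖ ≤ 3 := by
    unfold Z
    have h := norm_zH_le (s := (s.re : ℂ)) (by simp; linarith)
    simp only [ofReal_re] at h
    refine (norm_sub_le _ _).trans ?_
    rw [norm_mul, norm_mul, norm_real, Real.norm_of_nonneg (by linarith)]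
    have e3 : ‖(s.re : ℂ) - 1‖ = s.re - 1 := by
      rw [← ofReal_one, ← ofReal_sub, norm_real, Real.norm_of_nonneg (by linarith)]
    rw [e3]
    have : s.re * (s.re - 1) * ‖zH (s.re : ℂ)‖ ≤ s.re * (s.re - 1) * (1 / s.re) := by
      gcongr
    have e4 : s.re * (s.re - 1) * (1 / s.re) = s.re - 1 := by
      field_simp
    linarith
  rw [Z_eq_of_one_lt hσ, norm_mul] at hZ
  have e3 : ‖(s.re : ℂ) - 1‖ = s.re - 1 := by
    rw [← ofReal_one, ← ofReal_sub, norm_real, Real.norm_of_nonneg (by linarith)]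
  rw [e3] at hZ
  have h5 : ‖riemannZeta s‖⁻¹ ≤ 3 / (s.re - 1) := by
    rw [le_div_iff₀ (by linarith), ← norm_inv]
    nlinarith
  refine ⟨?_, h5⟩
  have h6 : 0 < ‖riemannZeta s‖ := norm_pos_iff.mpr hz
  rw [inv_eq_one_div, div_le_div_iff₀ h6 (by linarith)] at h5
  linarith

lemma zeta_logDeriv {s : ℂ} (hs : 1 < s.re) :
    -deriv riemannZeta s / riemannZeta s = 1 / (s - 1) - deriv Z s / Z s := by
  have hs0 : s - 1 ≠ 0 := by
    intro h
    rw [sub_eq_zero] at h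
    rw [h] at hs
    simp at hs
  have hz : riemannZeta s ≠ 0 := riemannZeta_ne_zero_of_one_lt_re hs
  have h1 : HasDerivAt Z (1 * riemannZeta s + (s - 1) * deriv riemannZeta s) s := by
    have := ((hasDerivAt_id s).sub_const 1).mul
      (differentiableAt_riemannZeta (sub_ne_zero.mp hs0)).hasDerivAt
    refine this.congr_of_eventuallyEq ?_
    filter_upwards [(isOpen_lt continuous_const continuous_re).mem_nhds hs] with w hw
    simpa using Z_eq_of_one_lt hw
  rw [h1.deriv, Z_eq_of_one_lt hs]
  field_simp
  ring

/-- The inequality `3 + 4 cos θ + cos 2θ ≥ 0`, applied termwise to `-ζ'/ζ = ∑ Λ(n) n^(-s)`. -/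
lemma three_four_one {σ t : ℝ} (hσ : 1 < σ) :
    0 ≤ 3 * (-deriv riemannZeta (σ : ℂ) / riemannZeta (σ : ℂ)).re
      + 4 * (-deriv riemannZeta (σ + t * I) / riemannZeta (σ + t * I)).re
      + (-deriv riemannZeta (σ + (2 * t : ℝ) * I) / riemannZeta (σ + (2 * t : ℝ) * I)).re := by
  have key : ∀ u : ℝ, HasSum (fun n : ℕ => (if n = 0 then 0 else
        ArithmeticFunction.vonMangoldt n * (n : ℝ) ^ (-σ) * Real.cos (u * Real.log n)))
      (-deriv riemannZeta (σ + u * I) / riemannZeta (σ + u * I)).re := by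
    intro u
    have hre : 1 < ((σ : ℂ) + u * I).re := by simpa using hσ
    rw [← ArithmeticFunction.LSeries_vonMangoldt_eq_deriv_riemannZeta_div hre]
    have h := hasSum_re (ArithmeticFunction.LSeriesSummable_vonMangoldt hre).LSeriesHasSum
    refine h.congr_fun ?_
    intro n
    rw [LSeries.term_def]
    split_ifs with hn
    · simp
    · have hn0 : (0 : ℝ) < n := by exact_mod_cast Nat.pos_of_ne_zero hn
      have e : (n : ℂ) ^ ((σ : ℂ) + u * I) =
          ((n : ℝ) ^ σ : ℝ) * exp ((u * Real.log n : ℝ) * I) := by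
        have hnc : (n : ℂ) ≠ 0 := by exact_mod_cast hn
        rw [cpow_add _ _ hnc, ofReal_cpow hn0.le, ofReal_natCast]
        congr 1
        rw [cpow_def_of_ne_zero hnc, ← natCast_log]
        push_cast
        ring_nf
      rw [e, div_eq_mul_inv, mul_inv, ← exp_neg, ← ofReal_inv, ← mul_assoc, ← ofReal_mul,
        re_ofReal_mul, ← neg_mul, ← ofReal_neg, exp_ofReal_mul_I_re, Real.cos_neg,
        Real.rpow_neg hn0.le]
  have h0 := (key 0).mul_left 3
  have h1 := (key t).mul_left 4
  have h2 := key (2 * t)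
  have hs := (h0.add h1).add h2
  simp only [ofReal_zero, zero_mul, add_zero] at hs
  refine hs.nonneg fun n => ?_
  split_ifs with hn
  · simp
  · have hn0 : (0 : ℝ) < n := by exact_mod_cast Nat.pos_of_ne_zero hn
    have : 0 ≤ ArithmeticFunction.vonMangoldt n * (n : ℝ) ^ (-σ) :=
      mul_nonneg ArithmeticFunction.vonMangoldt_nonneg (by positivity)
    have e : 2 * t * Real.log n = 2 * (t * Real.log n) := by ring
    rw [e, Real.cos_two_mul]
    simp only [Real.cos_zero]
    nlinarith [mul_nonneg this (sq_nonneg (1 + Real.cos (t * Real.log n)))]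

end RoughMoebius

/-! ### The zero-free region and a lower bound -/

namespace RoughMoebius

open Complex Metric MeasureTheory

/-- The height parameter `log (|t| + 4)`; the `4` makes it at least `1` everywhere. -/
noncomputable def ell (t : ℝ) : ℝ := Real.log (|t| + 4)

lemma exp_ell (t : ℝ) : Real.exp (ell t) = |t| + 4 := Real.exp_log (by positivity)

lemma one_le_ell (t : ℝ) : 1 ≤ ell t := by
  rw [ell, Real.le_log_iff_exp_le (by positivity)]
  have := Real.exp_one_lt_d9
  have := abs_nonneg t
  linarith

lemma ell_le_two_mul {t u : ℝ} (h : |u| ≤ 2 * |t| + 4) : ell u ≤ 2 * ell t := by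
  rw [ell, ell, ← Real.log_rpow (by positivity)]
  refine Real.log_le_log (by positivity) ?_
  rw [Real.rpow_two]
  nlinarith [abs_nonneg t]

lemma norm_Z_add_le {σ t : ℝ} (h1 : 1 < σ) (h2 : σ ≤ 3 / 2) {z : ℂ} (hz : ‖z‖ ≤ 1 / 2) :
    ‖Z (σ + t * I + z)‖ ≤ Real.exp (3 * ell t) := by
  have hre : |z.re| ≤ 1 / 2 := (abs_re_le_norm z).trans hz
  have hre' := abs_le.mp hre
  have hb := norm_Z_le (s := σ + t * I + z) (by simp; linarith)
  have ht : ‖(t : ℂ) * I‖ = |t| := by simp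
  have n1 : ‖(σ : ℂ) + t * I + z‖ ≤ |t| + 4 := by
    refine (norm_add₃_le).trans ?_
    rw [ht, norm_real, Real.norm_of_nonneg (by linarith)]
    linarith
  have n2 : ‖(σ : ℂ) + t * I + z - 1‖ ≤ |t| + 1 := by
    have e : (σ : ℂ) + t * I + z - 1 = ((σ - 1 : ℝ) : ℂ) + t * I + z := by
      push_cast
      ring
    rw [e]
    refine (norm_add₃_le).trans ?_
    rw [ht, norm_real, Real.norm_of_nonneg (by linarith)]
    linarith
  have e3 : Real.exp (3 * ell t) = (|t| + 4) ^ 3 := by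
    rw [← exp_ell t, ← Real.exp_nat_mul]
    norm_num
  rw [e3]
  have ha := abs_nonneg t
  have : ‖(σ : ℂ) + t * I + z‖ * ‖(σ : ℂ) + t * I + z - 1‖ ≤ (|t| + 4) * (|t| + 1) := by gcongr
  nlinarith [mul_nonneg ha ha, mul_nonneg (mul_nonneg ha ha) ha]

lemma norm_Z_ge {σ t : ℝ} (h1 : 1 < σ) (h2 : σ ≤ 2) :
    |t| * ((σ - 1) / 3) ≤ ‖Z (σ + t * I)‖ := by
  have hre : ((σ : ℂ) + t * I).re = σ := by simp
  have h := (norm_zeta_ge (s := σ + t * I) (by simpa using h1) (by simpa using h2)).1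
  rw [Z_eq_of_one_lt (by simpa using h1), norm_mul]
  rw [hre] at h
  have him : |t| ≤ ‖(σ : ℂ) + t * I - 1‖ := by
    have := abs_im_le_norm ((σ : ℂ) + t * I - 1)
    simpa using this
  have : 0 ≤ (σ - 1) / 3 := by linarith
  gcongr

lemma norm_Z_ratio {σ t : ℝ} (h1 : 1 < σ) (h2 : σ ≤ 3 / 2) (ht : 1 ≤ |t|) {z : ℂ}
    (hz : ‖z‖ ≤ 1 / 2) :
    ‖Z (σ + t * I + z)‖ ≤ Real.exp (3 * ell t + Real.log (3 / (σ - 1))) * ‖Z (σ + t * I)‖ := by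
  have hp : 0 < 3 / (σ - 1) := div_pos (by norm_num) (by linarith)
  rw [Real.exp_add, Real.exp_log hp, mul_assoc]
  refine (norm_Z_add_le h1 h2 hz).trans ?_
  refine le_mul_of_one_le_right (Real.exp_pos _).le ?_
  have h3 := norm_Z_ge (t := t) h1 (by linarith)
  have h4 : 1 * ((σ - 1) / 3) ≤ |t| * ((σ - 1) / 3) := by
    gcongr
  calc (1 : ℝ) = 3 / (σ - 1) * ((σ - 1) / 3) := by
        have : σ - 1 ≠ 0 := by linarith
        field_simp
    _ ≤ _ := by
        gcongr
        linarith

lemma M_pos {σ t : ℝ} (h1 : 1 < σ) (h2 : σ ≤ 3 / 2) : 0 < 3 * ell t + Real.log (3 / (σ - 1)) := by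
  have : 0 ≤ Real.log (3 / (σ - 1)) := by
    refine Real.log_nonneg ?_
    rw [le_div_iff₀ (by linarith)]
    linarith
  linarith [one_le_ell t]

lemma Z_shift_diff {σ t : ℝ} (h1 : 1 < σ) :
    DifferentiableOn ℂ (fun z => Z (σ + t * I + z)) (ball 0 1) := by
  intro z hz
  have hre := abs_le.mp ((abs_re_le_norm z).trans (le_of_lt (by simpa using hz : ‖z‖ < 1)))
  refine DifferentiableAt.differentiableWithinAt ?_
  have hd : DifferentiableAt ℂ Z (σ + t * I + z) := Z_differentiableAt (by simp; linarith)
  exact hd.comp z (by fun_prop)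

lemma Z_shift_zero {σ t : ℝ} (h1 : 1 < σ) : ∀ z ∈ ball (0 : ℂ) (1 / 8),
    Z (σ + t * I + z) = 0 → z.re ≤ 0 := by
  intro z _ h
  by_contra hc
  push Not at hc
  exact Z_ne_zero (s := σ + t * I + z) (by simp; linarith) h

lemma re_logDeriv_ge {σ t : ℝ} (h1 : 1 < σ) (h2 : σ ≤ 3 / 2) (ht : 1 ≤ |t|) :
    -(32 * (3 * ell t + Real.log (3 / (σ - 1)))) ≤
      (deriv Z (σ + t * I) / Z (σ + t * I)).re := by
  have := landau_re (M_pos (t := t) h1 h2) (f := fun z => Z (σ + t * I + z)) (Z_shift_diff h1)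
    (by simpa using Z_ne_zero (s := σ + t * I) (by simpa using h1.le))
    (fun z hz => by simpa using norm_Z_ratio h1 h2 ht (by simpa using hz)) (Z_shift_zero h1)
  rw [deriv_comp_const_add] at this
  simpa using this

/-- A zero `β + it` of `Z` forces `Re (Z'/Z) (σ + it)` to be large for `σ` slightly to the right of `β`. -/
lemma re_logDeriv_ge_zero {σ t β : ℝ} (h1 : 1 < σ) (h2 : σ ≤ 3 / 2) (ht : 1 ≤ |t|)
    (hβ : Z (β + t * I) = 0) (hβ1 : β < σ) (hβ2 : σ - β < 1 / 8) :
    -(32 * (3 * ell t + Real.log (3 / (σ - 1)))) + 1 / (σ - β) ≤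
      (deriv Z (σ + t * I) / Z (σ + t * I)).re := by
  have := landau_re_zero (M_pos (t := t) h1 h2) (f := fun z => Z (σ + t * I + z)) (Z_shift_diff h1)
    (by simpa using Z_ne_zero (s := σ + t * I) (by simpa using h1.le))
    (fun z hz => by simpa using norm_Z_ratio h1 h2 ht (by simpa using hz)) (Z_shift_zero h1)
    (ρ := ((β - σ : ℝ) : ℂ)) (by
      rw [norm_real, Real.norm_eq_abs, abs_of_neg (by linarith)]
      linarith) (by
      rw [← hβ]
      congr 1
      push_cast
      ring)
  rw [deriv_comp_const_add] at this
  have e : (-1 / ((β - σ : ℝ) : ℂ)).re = 1 / (σ - β) := by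
    rw [show (-1 : ℂ) / ((β - σ : ℝ) : ℂ) = ((-1 / (β - σ) : ℝ) : ℂ) by push_cast; rfl, ofReal_re,
      ← neg_sub σ β, neg_div_neg_eq]
  rw [e] at this
  simpa using this

lemma exists_real_logDeriv_bound : ∃ K : ℝ, 0 ≤ K ∧ ∀ σ : ℝ, 1 < σ → σ ≤ 3 / 2 →
    -K ≤ (deriv Z (σ : ℂ) / Z (σ : ℂ)).re := by
  have hopen : IsOpen {s : ℂ | 0 < s.re} := isOpen_lt continuous_const continuous_re
  have hd : DifferentiableOn ℂ Z {s : ℂ | 0 < s.re} :=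
    fun s hs => (Z_differentiableAt hs).differentiableWithinAt
  have hc : ContinuousOn (fun σ : ℝ => deriv Z (σ : ℂ) / Z (σ : ℂ)) (Set.Icc 1 (3 / 2)) := by
    have hmap : Set.MapsTo (fun σ : ℝ => (σ : ℂ)) (Set.Icc 1 (3 / 2)) {s : ℂ | 0 < s.re} := by
      intro σ hσ
      have := hσ.1
      simp
      linarith
    refine ContinuousOn.div ?_ ?_ ?_
    · exact (hd.deriv hopen).continuousOn.comp continuous_ofReal.continuousOn hmap
    · exact hd.continuousOn.comp continuous_ofReal.continuousOn hmap
    · intro σ hσ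
      exact Z_ne_zero (by simpa using hσ.1)
  obtain ⟨K, hK⟩ := isCompact_Icc.exists_bound_of_continuousOn hc
  refine ⟨max K 0, le_max_right _ _, fun σ h1 h2 => ?_⟩
  have h3 := hK σ ⟨h1.le, h2⟩
  have h4 := neg_abs_le (deriv Z (σ : ℂ) / Z (σ : ℂ)).re
  have h5 := abs_re_le_norm (deriv Z (σ : ℂ) / Z (σ : ℂ))
  have h6 := le_max_left K 0
  linarith

lemma inv_sub_one_re_le {σ t : ℝ} (h1 : 1 < σ) (h2 : σ ≤ 3 / 2) (ht : 1 ≤ |t|) :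
    (1 / ((σ : ℂ) + t * I - 1)).re ≤ 1 := by
  refine (re_le_norm _).trans ?_
  rw [norm_div, norm_one]
  have := abs_im_le_norm ((σ : ℂ) + t * I - 1)
  simp at this
  rw [div_le_one (by linarith)]
  linarith

/-- The classical zero-free region: `Z` does not vanish for `Re s ≥ 1 - δ / log (|Im s| + 4)`,
`|Im s| ≥ 1`. -/
theorem zero_free : ∃ δ : ℝ, 0 < δ ∧ δ ≤ 1 ∧ ∀ s : ℂ, 1 ≤ |s.im| → 1 - δ / ell s.im ≤ s.re →
    Z s ≠ 0 := by
  obtain ⟨K, hK0, hK⟩ := exists_real_logDeriv_bound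
  -- The comparison is made at `σ = 1 + a / ℓ`. The gain from a zero is of order `ℓ / a = b² ℓ`, the
  -- losses are `O(ℓ + log (1 / a)) = O(b ℓ)`, so a large `b` gives a contradiction.
  set b : ℝ := 2 * (3 * K + 741) + 2000 with hb
  have hb0 : 2000 ≤ b := by
    rw [hb]
    linarith
  have hbpos : 0 < b := by linarith
  set a : ℝ := 1 / b ^ 2 with ha
  have ha0 : 0 < a := by positivity
  have ha1 : a ≤ 1 / 16 := by
    rw [ha]
    gcongr
    nlinarith
  refine ⟨a / 7, by positivity, by linarith, ?_⟩
  intro s hs1 hs2 hZ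
  set t := s.im with ht
  set β := s.re with hβ
  have hs : s = β + t * I := (re_add_im s).symm
  have hℓ := one_le_ell t
  set ℓ := ell t with hℓdef
  have hℓ0 : 0 < ℓ := by linarith
  have hβ1 : β < 1 := by
    by_contra h
    push Not at h
    exact Z_ne_zero h hZ
  set σ := 1 + a / ℓ with hσ
  have haℓ : a / ℓ ≤ a := div_le_self ha0.le hℓ
  have haℓ0 : 0 < a / ℓ := by positivity
  have h1 : 1 < σ := by linarith
  have h2 : σ ≤ 3 / 2 := by linarith
  have e7 : a / 7 / ℓ = (a / ℓ) / 7 := by ring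
  have h341 := three_four_one (t := t) h1
  have ht2 : 1 ≤ |2 * t| := by
    rw [abs_mul, abs_two]
    linarith
  have hre : 1 < ((σ : ℂ)).re := by simpa using h1
  have hre1 : 1 < ((σ : ℂ) + t * I).re := by simpa using h1
  have hre2 : 1 < ((σ : ℂ) + (2 * t : ℝ) * I).re := by simpa using h1
  rw [zeta_logDeriv hre, zeta_logDeriv hre1, zeta_logDeriv hre2, sub_re, sub_re, sub_re] at h341
  have A0 := hK σ h1 h2
  have A0' : (1 / ((σ : ℂ) - 1)).re = ℓ / a := by
    rw [show (1 : ℂ) / ((σ : ℂ) - 1) = ((1 / (σ - 1) : ℝ) : ℂ) by push_cast; rfl, ofReal_re,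
      show σ - 1 = a / ℓ by rw [hσ]; ring, one_div_div]
  have A1 := re_logDeriv_ge_zero (β := β) h1 h2 hs1 (by rw [← hs]; exact hZ) (by linarith)
    (by rw [hσ]; linarith)
  have A1' := inv_sub_one_re_le h1 h2 hs1
  have A2 := re_logDeriv_ge h1 h2 ht2
  have A2' := inv_sub_one_re_le h1 h2 ht2
  have hℓ2 : ell (2 * t) ≤ 2 * ℓ := ell_le_two_mul (by rw [abs_mul, abs_two]; linarith)
  have hlog : Real.log (3 / (σ - 1)) ≤ 2 + 2 * b + ℓ := by
    have e : 3 / (σ - 1) = 3 * (b * b) * ℓ := by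
      rw [hσ, ha]
      field_simp
      ring
    rw [e, Real.log_mul (by positivity) (by positivity), Real.log_mul (by positivity)
      (by positivity), Real.log_mul (by positivity) (by positivity)]
    have l1 := Real.log_le_sub_one_of_pos (show (0 : ℝ) < 3 by norm_num)
    have l2 := Real.log_le_sub_one_of_pos hbpos
    have l3 := Real.log_le_sub_one_of_pos hℓ0
    linarith
  have hgain : 7 / 8 * (ℓ / a) ≤ 1 / (σ - β) := by
    rw [le_div_iff₀ (by linarith)]
    have : σ - β ≤ 8 / 7 * (a / ℓ) := by
      rw [hσ]
      linarith
    calc 7 / 8 * (ℓ / a) * (σ - β) ≤ 7 / 8 * (ℓ / a) * (8 / 7 * (a / ℓ)) := by gcongr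
      _ = 1 := by field_simp
  have hfin : 1 / 2 * (ℓ / a) ≤ 3 * K + 5 + 736 * ℓ + 160 * (2 + 2 * b) := by linarith
  have e8 : ℓ / a = ℓ * b ^ 2 := by
    rw [ha]
    field_simp
  rw [e8] at hfin
  nlinarith [mul_le_mul_of_nonneg_right hℓ (show (0 : ℝ) ≤ 3 * K + 5 + 160 * (2 + 2 * b) by positivity),
    mul_pos hℓ0 hbpos]

/-- At bounded height, where `Z` does not vanish on `Re s ≥ 1`, the lower bound comes from compactness. -/
theorem compact_lower : ∃ c m : ℝ, 0 < c ∧ 0 < m ∧ ∀ s : ℂ, |s.im| ≤ 2 → 1 - c ≤ s.re →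
    s.re ≤ 3 / 2 → m ≤ ‖Z s‖ := by
  have hopen : IsOpen {s : ℂ | 0 < s.re} := isOpen_lt continuous_const continuous_re
  set Q : Set ℂ := Set.Icc (1 : ℝ) (3 / 2) ×ℂ Set.Icc (-2 : ℝ) 2 with hQ
  have hQc : IsCompact Q := isCompact_Icc.reProdIm isCompact_Icc
  have hV : IsOpen ({s : ℂ | 0 < s.re} ∩ Z ⁻¹' {0}ᶜ) :=
    Z_continuousOn.isOpen_inter_preimage hopen isOpen_compl_singleton
  have hsub : Q ⊆ {s : ℂ | 0 < s.re} ∩ Z ⁻¹' {0}ᶜ := by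
    intro s hs
    have h1 : 1 ≤ s.re := (mem_reProdIm.mp hs).1.1
    exact ⟨by simp only [Set.mem_ofPred_eq]; linarith, by simpa using Z_ne_zero h1⟩
  obtain ⟨c, hc, hcs⟩ := hQc.exists_cthickening_subset_open hV hsub
  have hKc : IsCompact (cthickening c Q) := hQc.cthickening
  have hne : (cthickening c Q).Nonempty := by
    refine ⟨1, self_subset_cthickening _ ?_⟩
    rw [hQ, mem_reProdIm]
    norm_num
  have hcont : ContinuousOn (fun s => ‖Z s‖) (cthickening c Q) :=
    (Z_continuousOn.mono fun s hs => (hcs hs).1).norm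
  obtain ⟨s0, hs0, hmin⟩ := hKc.exists_isMinOn hne hcont
  refine ⟨c, ‖Z s0‖, hc, norm_pos_iff.mpr (by simpa using (hcs hs0).2), ?_⟩
  intro s h1 h2 h3
  refine hmin ?_
  refine mem_cthickening_of_dist_le s ((max s.re 1 : ℝ) + s.im * I) c Q ?_ ?_
  · rw [hQ, mem_reProdIm]
    have := abs_le.mp h1
    refine ⟨⟨by simp, by simp; exact ⟨h3, by norm_num⟩⟩, by simpa using this⟩
  · rw [dist_eq]
    have e : s - ((max s.re 1 : ℝ) + s.im * I) = ((s.re - max s.re 1 : ℝ) : ℂ) := by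
      nth_rewrite 1 [← re_add_im s]
      push_cast
      ring
    rw [e, norm_real, Real.norm_eq_abs, abs_le]
    rcases le_total s.re 1 with h | h
    · rw [max_eq_right h]
      constructor <;> linarith
    · rw [max_eq_left h]
      constructor <;> linarith

/-- High up, `Z` is bounded below in a slightly smaller region than that of `zero_free`: a logarithm of
`Z` exists on a disc of radius `≍ 1 / ℓ` around `σ + it` with `σ` just right of `1`, is `O(ℓ)` there,
and hence is at most `ℓ / 4 + O(1)` on a disc smaller by a large constant factor. So `|Z|` drops by at
most `O(exp (ℓ / 4))` from its value at `σ + it`, which is `≫ |t| / ℓ`. -/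
theorem large_lower : ∃ c m : ℝ, 0 < c ∧ 0 < m ∧ ∀ s : ℂ, 2 ≤ |s.im| → 1 - c / ell s.im ≤ s.re →
    s.re ≤ 3 / 2 → m ≤ ‖Z s‖ := by
  obtain ⟨δ, hδ0, hδ1, hδ⟩ := zero_free
  set ε := δ / 264 with hε
  have hε0 : 0 < ε := by positivity
  have hε1 : ε ≤ 1 / 264 := by
    rw [hε]
    linarith
  refine ⟨ε, (ε / 3) ^ 2 / 3, hε0, by positivity, ?_⟩
  intro s h1 h2 h3
  set t := s.im with ht
  have hℓ := one_le_ell t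
  have hexp := exp_ell t
  set ℓ := ell t with hℓdef
  have hℓ0 : 0 < ℓ := by linarith
  have hεℓ : ε / ℓ ≤ ε := div_le_self hε0.le hℓ
  have hεℓ0 : 0 < ε / ℓ := by positivity
  have hs : s = s.re + t * I := (re_add_im s).symm
  have hu : |t| + 4 ≤ 3 * |t| := by linarith
  have hℓexp : ℓ * Real.exp (ℓ / 4) ≤ Real.exp ℓ := by
    have e : Real.exp ℓ = Real.exp (3 / 4 * ℓ) * Real.exp (ℓ / 4) := by
      rw [← Real.exp_add]
      ring_nf
    rw [e]
    gcongr
    have := Real.quadratic_le_exp_of_nonneg (show 0 ≤ 3 / 4 * ℓ by positivity)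
    nlinarith [sq_nonneg (ℓ - 1)]
  rcases le_or_gt (1 + ε / ℓ) s.re with hc | hc
  · have h4 := norm_Z_ge (σ := s.re) (t := t) (by linarith) (by linarith)
    rw [← hs] at h4
    refine le_trans ?_ h4
    have h5 : ε / ℓ / 3 ≤ (s.re - 1) / 3 := by linarith
    have h6 : (ε / 3) ^ 2 / 3 ≤ |t| * (ε / ℓ / 3) := by
      have : ℓ ≤ 3 * |t| := by
        have := Real.add_one_le_exp ℓ
        linarith
      calc (ε / 3) ^ 2 / 3 ≤ 1 / 3 * (ε / 3) := by nlinarith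
        _ ≤ |t| / ℓ * (ε / 3) := by
          refine mul_le_mul_of_nonneg_right ?_ (by positivity)
          rw [div_le_div_iff₀ (by norm_num) hℓ0]
          linarith
        _ = _ := by ring
    exact h6.trans (by gcongr)
  · set σ := 1 + ε / ℓ with hσ
    have hσ1 : 1 < σ := by linarith
    have hσ2 : σ ≤ 3 / 2 := by linarith
    set R := δ / (4 * ℓ) with hR
    have hR0 : 0 < R := by positivity
    have hδℓ : δ / ℓ ≤ 1 := (div_le_self hδ0.le hℓ).trans hδ1
    have hR4 : R = δ / ℓ / 4 := by
      rw [hR]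
      field_simp
    have hRε : R = 66 * (ε / ℓ) := by
      rw [hR, hε]
      field_simp
      norm_num
    set M := 3 * ell t + Real.log (3 / (σ - 1)) with hM
    have hMpos : 0 < M := M_pos hσ1 hσ2
    obtain ⟨h, -, heq, hbd⟩ := exists_log_bound (f := fun z => Z (σ + t * I + z)) (M := M) (R := R)
      hMpos hR0 ((Z_shift_diff hσ1).mono (ball_subset_ball (by linarith)))
      (by
        intro z hz
        have hz' : ‖z‖ < R := by simpa using hz
        have hzre := abs_le.mp ((abs_re_le_norm z).trans hz'.le)
        have hzim := (abs_im_le_norm z).trans hz'.le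
        have him : ((σ : ℂ) + t * I + z).im = t + z.im := by simp
        have hrez : ((σ : ℂ) + t * I + z).re = σ + z.re := by simp
        have hi1 : |t| ≤ |t + z.im| + |z.im| := by
          have := abs_sub (t + z.im) z.im
          rwa [add_sub_cancel_right] at this
        have hi2 := abs_add_le t z.im
        apply hδ
        · rw [him]
          linarith
        · rw [him, hrez]
          have hle : ell (t + z.im) ≤ 2 * ℓ := ell_le_two_mul (by linarith)
          have : δ / (2 * ℓ) ≤ δ / ell (t + z.im) := by
            have := one_le_ell (t + z.im)
            gcongr
          have e2 : δ / (2 * ℓ) = 2 * R := by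
            rw [hR]
            field_simp
            norm_num
          linarith)
      (by
        intro z hz
        have hz' : ‖z‖ < R := by simpa using hz
        simpa using norm_Z_ratio hσ1 hσ2 (by linarith) (by linarith : ‖z‖ ≤ 1 / 2))
    set z : ℂ := ((s.re - σ : ℝ) : ℂ) with hz
    have hzn : ‖z‖ ≤ 2 * (ε / ℓ) := by
      rw [hz, norm_real, Real.norm_eq_abs, abs_le]
      constructor <;> linarith
    have hzmem : z ∈ ball (0 : ℂ) R := by
      rw [mem_ball_zero_iff, hRε]
      linarith
    have hsz : (σ : ℂ) + t * I + z = s := by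
      rw [hz]
      nth_rewrite 2 [hs]
      push_cast
      ring
    have e1 := heq z hzmem
    have e2 := hbd z hzmem
    simp only [hsz, add_zero] at e1
    have hlog : Real.log (3 / (σ - 1)) ≤ Real.log (3 / ε) + ℓ := by
      have e : 3 / (σ - 1) = 3 / ε * ℓ := by
        rw [show σ - 1 = ε / ℓ by rw [hσ]; ring]
        field_simp
      rw [e, Real.log_mul (by positivity) (by positivity)]
      have l3 := Real.log_le_sub_one_of_pos hℓ0
      linarith
    have hlog0 : 0 ≤ Real.log (3 / ε) := by
      refine Real.log_nonneg ?_
      rw [le_div_iff₀ hε0]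
      linarith
    have e3 : ‖h z‖ ≤ ℓ / 4 + Real.log (3 / ε) := by
      refine e2.trans ?_
      have hd : 64 * (ε / ℓ) ≤ R - ‖z‖ := by linarith
      calc 2 * M * ‖z‖ / (R - ‖z‖) ≤ 2 * M * (2 * (ε / ℓ)) / (64 * (ε / ℓ)) := by gcongr
        _ = M / 16 := by
          field_simp
          norm_num
        _ ≤ _ := by linarith
    have hre : -(ℓ / 4 + Real.log (3 / ε)) ≤ (h z).re := by
      have := neg_abs_le (h z).re
      have := abs_re_le_norm (h z)
      linarith
    rw [e1, norm_mul, norm_exp]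
    have h4 := norm_Z_ge (σ := σ) (t := t) hσ1 (by linarith)
    have e5 : σ - 1 = ε / ℓ := by rw [hσ]; ring
    rw [e5] at h4
    have e6 : Real.exp (-(ℓ / 4 + Real.log (3 / ε))) = (Real.exp (ℓ / 4))⁻¹ * (ε / 3) := by
      rw [neg_add, Real.exp_add, Real.exp_neg, Real.exp_neg, Real.exp_log (by positivity), inv_div]
    calc (ε / 3) ^ 2 / 3 = 1 / 3 * (ε / 3) * (ε / 3) := by ring
      _ ≤ |t| / (ℓ * Real.exp (ℓ / 4)) * (ε / 3) * (ε / 3) := by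
          refine mul_le_mul_of_nonneg_right (mul_le_mul_of_nonneg_right ?_ (by positivity))
            (by positivity)
          rw [div_le_div_iff₀ (by norm_num) (by positivity)]
          linarith
      _ = |t| * (ε / ℓ / 3) * Real.exp (-(ℓ / 4 + Real.log (3 / ε))) := by
          rw [e6]
          field_simp
      _ ≤ _ := by gcongr

/-- A uniform lower bound for `(s - 1) ζ(s)` in the classical region `Re s ≥ 1 - c / log (|Im s| + 4)`. -/
theorem Z_lower : ∃ c m : ℝ, 0 < c ∧ c ≤ 1 / 2 ∧ 0 < m ∧ ∀ s : ℂ, 1 - c / ell s.im ≤ s.re →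
    s.re ≤ 3 / 2 → m ≤ ‖Z s‖ := by
  obtain ⟨c₁, m₁, hc₁, hm₁, h₁⟩ := compact_lower
  obtain ⟨c₂, m₂, hc₂, hm₂, h₂⟩ := large_lower
  refine ⟨min (1 / 2) (min c₁ c₂), min m₁ m₂, by positivity, min_le_left _ _, by positivity, ?_⟩
  intro s hs hs'
  have hℓ := one_le_ell s.im
  set c := min (1 / 2) (min c₁ c₂) with hc
  have hc0 : 0 < c := by positivity
  have hcc₁ : c ≤ c₁ := (min_le_right _ _).trans (min_le_left _ _)
  have hcc₂ : c ≤ c₂ := (min_le_right _ _).trans (min_le_right _ _)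
  rcases le_total |s.im| 2 with h | h
  · refine (min_le_left _ _).trans (h₁ s h ?_ hs')
    have : c / ell s.im ≤ c := div_le_self hc0.le hℓ
    linarith
  · refine (min_le_right _ _).trans (h₂ s h ?_ hs')
    have : c / ell s.im ≤ c₂ / ell s.im := by gcongr
    linarith

end RoughMoebius

/-! ### A smoothed Perron formula -/

namespace RoughMoebius
open Complex Metric MeasureTheory

lemma line_norm_ge {σ : ℝ} (h0 : 0 < σ) (h1 : σ ≤ 1) (t : ℝ) :
    σ ^ 2 * (1 + t ^ 2) ≤ ‖(σ : ℂ) + t * I‖ * ‖(σ : ℂ) + t * I + 1‖ := by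
  have e : ‖(σ : ℂ) + t * I‖ ^ 2 = σ ^ 2 + t ^ 2 := by
    rw [← normSq_eq_norm_sq, normSq_add_mul_I]
  have e' : ‖(σ : ℂ) + t * I + 1‖ ^ 2 = (σ + 1) ^ 2 + t ^ 2 := by
    rw [← normSq_eq_norm_sq, show (σ : ℂ) + t * I + 1 = ((σ + 1 : ℝ) : ℂ) + t * I by push_cast; ring,
      normSq_add_mul_I]
  have hle : ‖(σ : ℂ) + t * I‖ ≤ ‖(σ : ℂ) + t * I + 1‖ := by
    refine (sq_le_sq₀ (norm_nonneg _) (norm_nonneg _)).1 ?_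
    rw [e, e']
    nlinarith
  have : ‖(σ : ℂ) + t * I‖ ^ 2 ≤ ‖(σ : ℂ) + t * I‖ * ‖(σ : ℂ) + t * I + 1‖ := by
    rw [sq]
    gcongr
  refine le_trans ?_ this
  rw [e]
  have : σ ^ 2 ≤ 1 := by nlinarith
  nlinarith [sq_nonneg t]

lemma line_ne_zero {σ : ℝ} (h0 : 0 < σ) (t : ℝ) :
    (σ : ℂ) + t * I ≠ 0 ∧ (σ : ℂ) + t * I + 1 ≠ 0 := by
  constructor
  · intro h
    have := congrArg re h
    simp at this
    linarith
  · intro h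
    have := congrArg re h
    simp at this
    linarith

lemma line_kernel_norm_le {σ : ℝ} (h0 : 0 < σ) (h1 : σ ≤ 1) (t : ℝ) :
    ‖(1 : ℂ) / (((σ : ℂ) + t * I) * ((σ : ℂ) + t * I + 1))‖ ≤ (σ ^ 2)⁻¹ * (1 + t ^ 2)⁻¹ := by
  rw [norm_div, norm_one, norm_mul, ← mul_inv, ← one_div]
  exact one_div_le_one_div_of_le (by positivity) (line_norm_ge h0 h1 t)

lemma line_kernel_integrable {σ : ℝ} (h0 : 0 < σ) (h1 : σ ≤ 1) :
    Integrable fun t : ℝ => (1 : ℂ) / (((σ : ℂ) + t * I) * ((σ : ℂ) + t * I + 1)) := by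
  refine (integrable_inv_one_add_sq.const_mul (σ ^ 2)⁻¹).mono' ?_
    (.of_forall fun t => line_kernel_norm_le h0 h1 t)
  refine Continuous.aestronglyMeasurable ?_
  refine continuous_const.div (by fun_prop) fun t => ?_
  exact mul_ne_zero (line_ne_zero h0 t).1 (line_ne_zero h0 t).2

/-- Mellin inversion for the Fejér-type kernel `max (1 - u) 0`, whose Mellin transform is
`1 / (s (s + 1))`. -/
lemma kernel_inversion {σ : ℝ} (h0 : 0 < σ) (h1 : σ ≤ 1) {u : ℝ} (hu : 0 < u) :
    ∫ t : ℝ, (u : ℂ) ^ (-((σ : ℂ) + t * I)) *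
      (1 / (((σ : ℂ) + t * I) * ((σ : ℂ) + t * I + 1))) =
      2 * Real.pi * ((max (1 - u) 0 : ℝ) : ℂ) := by
  set f : ℝ → ℂ := fun t => (Set.Ioc (0 : ℝ) 1).indicator (fun _ => (1 : ℂ)) t -
    (Set.Ioc (0 : ℝ) 1).indicator (fun t : ℝ => (t : ℂ) ^ (1 : ℂ)) t with hf
  have hm : ∀ s : ℂ, 0 < s.re → HasMellin f s (1 / (s * (s + 1))) := by
    intro s hs
    have a := hasMellin_one_Ioc hs
    have b := hasMellin_cpow_Ioc 1 (s := s) (by simp; linarith)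
    have := hasMellin_sub a.1 b.1
    rw [a.2, b.2] at this
    have hs0 : s ≠ 0 := by rintro rfl; simp at hs
    have hs1 : s + 1 ≠ 0 := by
      intro h
      have := congrArg re h
      simp at this
      linarith
    rwa [show 1 / s - 1 / (s + 1) = 1 / (s * (s + 1)) by field_simp; ring] at this
  have hfu : ∀ v : ℝ, 0 < v → f v = ((max (1 - v) 0 : ℝ) : ℂ) := by
    intro v hv
    by_cases h : v ≤ 1
    · have hmem : v ∈ Set.Ioc (0 : ℝ) 1 := ⟨hv, h⟩
      simp only [hf, Set.indicator_of_mem hmem, cpow_one]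
      rw [max_eq_left (by linarith)]
      push_cast
      rfl
    · have hmem : v ∉ Set.Ioc (0 : ℝ) 1 := fun h' => h h'.2
      simp only [hf, Set.indicator_of_notMem hmem]
      rw [max_eq_right (by linarith)]
      simp
  have hline : ∀ t : ℝ, mellin f ((σ : ℂ) + t * I) =
      1 / (((σ : ℂ) + t * I) * ((σ : ℂ) + t * I + 1)) := fun t =>
    (hm _ (by simpa using h0)).2
  have hinv := mellinInv_mellin_eq σ f hu (hm σ (by simpa using h0)).1
    (by
      unfold VerticalIntegrable
      simp only [hline]
      exact line_kernel_integrable h0 h1)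
    (by
      have hc : ContinuousAt (fun v : ℝ => ((max (1 - v) 0 : ℝ) : ℂ)) u := by fun_prop
      refine hc.congr ?_
      filter_upwards [lt_mem_nhds hu] with v hv using (hfu v hv).symm)
  rw [mellinInv, hfu u hu] at hinv
  simp only [hline, smul_eq_mul] at hinv
  rw [← hinv, real_smul]
  have : (Real.pi : ℂ) ≠ 0 := by exact_mod_cast Real.pi_ne_zero
  rw [← mul_assoc, show (2 * Real.pi : ℂ) * ((1 / (2 * Real.pi) : ℝ) : ℂ) = 1 by
    push_cast
    field_simp, one_mul]

/-- The integrand of the Perron formula, `x ^ s / ((s + 1) Z (1 + s))`. -/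
noncomputable def G (x : ℝ) (s : ℂ) : ℂ := (x : ℂ) ^ s / ((s + 1) * Z (1 + s))

lemma tsum_moebius_term {s : ℂ} (hs : 1 < s.re) :
    ∑' n, LSeries.term (fun n => ((ArithmeticFunction.moebius n : ℤ) : ℂ)) s n =
      (riemannZeta s)⁻¹ := by
  have := ArithmeticFunction.LSeries_zeta_mul_Lseries_moebius hs
  rw [ArithmeticFunction.LSeries_zeta_eq_riemannZeta hs] at this
  exact (inv_eq_of_mul_eq_one_right this).symm

lemma norm_moebius_term_le (s : ℂ) (n : ℕ) :
    ‖LSeries.term (fun n => ((ArithmeticFunction.moebius n : ℤ) : ℂ)) s n‖ ≤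
      ‖LSeries.term 1 (s.re : ℂ) n‖ := by
  have h2 : ‖((ArithmeticFunction.moebius n : ℤ) : ℂ)‖ ≤ 1 := by
    rw [norm_intCast]
    exact_mod_cast ArithmeticFunction.abs_moebius_le_one (n := n)
  refine (LSeries.norm_term_le (g := 1) s (by simpa using h2)).trans ?_
  rw [LSeries.norm_term_eq, LSeries.norm_term_eq]
  simp

/-- A smoothed Perron formula: the average of `μ(n) / n` with weight `1 - n / x` is the integral of `G`
over the vertical line `Re s = σ`. The kernel decays like `|s|⁻²`, so everything converges
absolutely. -/
theorem perron {σ : ℝ} (h0 : 0 < σ) (h1 : σ ≤ 1) {x : ℝ} (hx : 0 < x) :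
    2 * Real.pi * ((∑ n ∈ Finset.Icc 1 ⌊x⌋₊,
      (ArithmeticFunction.moebius n : ℝ) / n * (1 - n / x) : ℝ) : ℂ) =
      ∫ t : ℝ, G x ((σ : ℂ) + t * I) := by
  set m : ℕ → ℂ := fun n => ((ArithmeticFunction.moebius n : ℤ) : ℂ) with hmdef
  set k : ℝ → ℂ := fun t => 1 / (((σ : ℂ) + t * I) * ((σ : ℂ) + t * I + 1)) with hk
  set F : ℕ → ℝ → ℂ := fun n t =>
    (x : ℂ) ^ ((σ : ℂ) + t * I) * k t * LSeries.term m (1 + ((σ : ℂ) + t * I)) n with hF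
  have hx0 : (x : ℂ) ≠ 0 := by exact_mod_cast hx.ne'
  have hre : ∀ t : ℝ, 1 < (1 + ((σ : ℂ) + t * I)).re := fun t => by simpa using h0
  have hxn : ∀ t : ℝ, ‖(x : ℂ) ^ ((σ : ℂ) + t * I)‖ = x ^ σ := fun t => by
    rw [norm_cpow_eq_rpow_re_of_pos hx]
    simp
  have hFn : ∀ n t, ‖F n t‖ ≤ x ^ σ * ‖LSeries.term 1 ((1 + σ : ℝ) : ℂ) n‖ * ‖k t‖ := by
    intro n t
    simp only [hF, norm_mul, hxn]
    have := norm_moebius_term_le (1 + ((σ : ℂ) + t * I)) n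
    rw [show (1 + ((σ : ℂ) + t * I)).re = 1 + σ by simp] at this
    rw [mul_right_comm]
    gcongr
  have hkint : Integrable k := line_kernel_integrable h0 h1
  have hxc : Continuous fun t : ℝ => (x : ℂ) ^ ((σ : ℂ) + t * I) := by
    refine Continuous.const_cpow (by fun_prop) (Or.inl hx0)
  have hFint : ∀ n, Integrable (F n) := by
    intro n
    refine (hkint.norm.const_mul (x ^ σ * ‖LSeries.term 1 ((1 + σ : ℝ) : ℂ) n‖)).mono' ?_
      (.of_forall (hFn n))
    refine (hxc.aestronglyMeasurable.mul hkint.aestronglyMeasurable).mul ?_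
    refine Continuous.aestronglyMeasurable ?_
    rcases Nat.eq_zero_or_pos n with rfl | hn
    · simp [continuous_const]
    · simp only [LSeries.term_of_ne_zero hn.ne']
      have hn0 : (n : ℂ) ≠ 0 := by exact_mod_cast hn.ne'
      refine continuous_const.div (Continuous.const_cpow (by fun_prop) (Or.inl hn0)) fun t => ?_
      simp [cpow_eq_zero_iff, hn0]
  have hsum := hasSum_integral_of_summable_integral_norm hFint (by
    have hs : Summable fun n => ‖LSeries.term 1 ((1 + σ : ℝ) : ℂ) n‖ :=
      (LSeriesSummable_one_iff.mpr (by rw [ofReal_re]; linarith)).norm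
    refine Summable.of_nonneg_of_le (fun n => integral_nonneg fun t => norm_nonneg _) (fun n => ?_)
      ((hs.mul_left (x ^ σ)).mul_right (∫ t, ‖k t‖))
    rw [← integral_const_mul]
    exact integral_mono (hFint n).norm (hkint.norm.const_mul _) (hFn n))
  have hG : ∀ t, ∑' n, F n t = G x ((σ : ℂ) + t * I) := by
    intro t
    simp only [hF]
    rw [tsum_mul_left, tsum_moebius_term (hre t), G, Z_eq_of_one_lt (hre t), add_sub_cancel_left, hk]
    obtain ⟨a, b⟩ := line_ne_zero h0 t
    have := riemannZeta_ne_zero_of_one_lt_re (hre t)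
    field_simp
  simp only [hG] at hsum
  have hval : ∀ n : ℕ, ∫ t, F n t =
      2 * Real.pi * (((ArithmeticFunction.moebius n : ℝ) / n * max (1 - n / x) 0 : ℝ) : ℂ) := by
    intro n
    rcases Nat.eq_zero_or_pos n with rfl | hn
    · simp [hF]
    have hn0 : (n : ℂ) ≠ 0 := by exact_mod_cast hn.ne'
    have hnr : (0 : ℝ) < n := by exact_mod_cast hn
    have hfe : F n = fun t : ℝ => (m n / n) * ((((n / x : ℝ)) : ℂ) ^ (-((σ : ℂ) + t * I)) * k t) := by
      funext t
      simp only [hF]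
      rw [LSeries.term_of_ne_zero hn.ne', ofReal_div, cpow_neg,
        ofReal_natCast, ← ofReal_natCast, div_cpow_ofReal_nonneg, cpow_add (x := ((n : ℝ) : ℂ)) 1 _ (by simpa using hn0), cpow_one]
      all_goals first | positivity | skip
      have e1 : (x : ℂ) ^ ((σ : ℂ) + t * I) ≠ 0 := by simp [cpow_eq_zero_iff, hx0]
      have e2 : (((n : ℝ)) : ℂ) ^ ((σ : ℂ) + t * I) ≠ 0 := by simp [cpow_eq_zero_iff, hn0]
      rw [ofReal_natCast] at e2 ⊢
      field_simp
    rw [hfe, integral_const_mul, kernel_inversion h0 h1 (by positivity)]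
    simp only [hmdef]
    push_cast
    ring
  simp only [hval] at hsum
  have hfin := hasSum_sum_of_ne_finset_zero (L := .unconditional ℕ) (s := Finset.Icc 1 ⌊x⌋₊)
    (f := fun n : ℕ => 2 * Real.pi *
      (((ArithmeticFunction.moebius n : ℝ) / n * max (1 - n / x) 0 : ℝ) : ℂ)) (by
    intro n hn
    rw [Finset.mem_Icc, not_and_or] at hn
    rcases hn with hn | hn
    · have : n = 0 := by omega
      simp [this]
    · have : x < n := Nat.lt_of_floor_lt (by omega)
      have : 1 < n / x := by rwa [one_lt_div hx]
      rw [max_eq_right (by linarith)]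
      simp)
  rw [hsum.unique hfin, ofReal_sum, Finset.mul_sum]
  refine Finset.sum_congr rfl fun n hn => ?_
  have : (n : ℝ) ≤ x := (Nat.le_floor_iff hx.le).1 (Finset.mem_Icc.1 hn).2
  have : n / x ≤ 1 := by rwa [div_le_one hx]
  rw [max_eq_left (by linarith)]

end RoughMoebius

/-! ### Shifting the contour -/

namespace RoughMoebius
open Complex Metric MeasureTheory

lemma norm_integral_Ioi_le {g : ℝ → ℂ} {B T : ℝ} (hT : 0 < T)
    (hg : ∀ t, T < t → ‖g t‖ ≤ B * t ^ (-2 : ℝ)) : ‖∫ t in Set.Ioi T, g t‖ ≤ B / T := by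
  have hi : IntegrableOn (fun t : ℝ => B * t ^ (-2 : ℝ)) (Set.Ioi T) :=
    (integrableOn_Ioi_rpow_of_lt (by norm_num) hT).const_mul B
  refine (norm_integral_le_of_norm_le hi ?_).trans ?_
  · refine (ae_restrict_iff' measurableSet_Ioi).2 (.of_forall fun t ht => hg t ht)
  · rw [integral_const_mul, integral_Ioi_rpow_of_lt (by norm_num) hT]
    norm_num
    rw [Real.rpow_neg_one]
    exact le_of_eq rfl

lemma norm_integral_sub_le {g : ℝ → ℂ} {B T : ℝ} (hT : 0 < T) (hi : Integrable g)
    (hg : ∀ t, T < |t| → ‖g t‖ ≤ B * |t| ^ (-2 : ℝ)) :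
    ‖∫ t, g t‖ ≤ ‖∫ t in (-T)..T, g t‖ + 2 * B / T := by
  have h1 : ‖∫ t in Set.Ioi T, g t‖ ≤ B / T := norm_integral_Ioi_le hT fun t ht => by
    have := hg t (by rwa [abs_of_pos (hT.trans ht)])
    rwa [abs_of_pos (hT.trans ht)] at this
  have h2 : ‖∫ t in Set.Ioi T, g (-t)‖ ≤ B / T := norm_integral_Ioi_le hT fun t ht => by
    have := hg (-t) (by rwa [abs_neg, abs_of_pos (hT.trans ht)])
    rwa [abs_neg, abs_of_pos (hT.trans ht)] at this
  rw [integral_comp_neg_Ioi] at h2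
  have e1 := intervalIntegral.integral_Iic_add_Ioi (b := T) hi.integrableOn hi.integrableOn
  have e2 := intervalIntegral.integral_Iic_sub_Iic (a := -T) (b := T) hi.integrableOn hi.integrableOn
  have e3 : ∫ t, g t = (∫ t in (-T)..T, g t) + ((∫ t in Set.Iic (-T), g t) +
      ∫ t in Set.Ioi T, g t) := by
    rw [← e1, ← e2]
    ring
  rw [e3]
  refine (norm_add_le _ _).trans ?_
  have := norm_add_le (∫ t in Set.Iic (-T), g t) (∫ t in Set.Ioi T, g t)
  have e4 : 2 * B / T = B / T + B / T := by ring
  linarith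

lemma norm_cpow_line {x : ℝ} (hx : 0 < x) (σ t : ℝ) :
    ‖(x : ℂ) ^ ((σ : ℂ) + t * I)‖ = x ^ σ := by
  rw [norm_cpow_eq_rpow_re_of_pos hx]
  simp

lemma norm_G_line_le {x σ : ℝ} (hx : 0 < x) (h0 : 0 < σ) (h1 : σ ≤ 1) (t : ℝ) :
    ‖G x ((σ : ℂ) + t * I)‖ ≤ x ^ σ * (3 / σ) * ‖(1 : ℂ) / (((σ : ℂ) + t * I) * ((σ : ℂ) + t * I + 1))‖ := by
  have hre : 1 < (1 + ((σ : ℂ) + t * I)).re := by simpa using h0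
  have hz := (norm_zeta_ge hre (by simp; linarith)).2
  rw [show (1 + ((σ : ℂ) + t * I)).re - 1 = σ by simp] at hz
  rw [G, Z_eq_of_one_lt hre, add_sub_cancel_left, norm_div, norm_cpow_line hx, mul_assoc]
  rw [norm_mul, norm_mul, norm_div, norm_one, norm_mul, div_eq_mul_inv]
  refine mul_le_mul_of_nonneg_left ?_ (by positivity)
  rw [mul_inv, mul_inv, one_div, mul_inv]
  calc _ = ‖riemannZeta (1 + ((σ : ℂ) + t * I))‖⁻¹ *
        (‖(σ : ℂ) + t * I‖⁻¹ * ‖(σ : ℂ) + t * I + 1‖⁻¹) := by ring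
    _ ≤ _ := by gcongr

lemma G_line_integrable {x σ : ℝ} (hx : 0 < x) (h0 : 0 < σ) (h1 : σ ≤ 1) :
    Integrable fun t : ℝ => G x ((σ : ℂ) + t * I) := by
  refine ((line_kernel_integrable h0 h1).norm.const_mul (x ^ σ * (3 / σ))).mono' ?_
    (.of_forall fun t => norm_G_line_le hx h0 h1 t)
  refine Continuous.aestronglyMeasurable ?_
  unfold G
  have hx0 : (x : ℂ) ≠ 0 := by exact_mod_cast hx.ne'
  refine (Continuous.const_cpow (by fun_prop) (Or.inl hx0)).div ?_ fun t => ?_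
  · refine Continuous.mul (by fun_prop) ?_
    refine Z_continuousOn.comp_continuous (by fun_prop) fun t => ?_
    simp
    linarith
  · exact mul_ne_zero (line_ne_zero h0 t).2 (Z_ne_zero (by simp; linarith))

lemma norm_G_tail_le {x σ : ℝ} (hx : 0 < x) (h0 : 0 < σ) (h1 : σ ≤ 1) {t : ℝ} (ht : 0 < |t|) :
    ‖G x ((σ : ℂ) + t * I)‖ ≤ x ^ σ * (3 / σ) * |t| ^ (-2 : ℝ) := by
  refine (norm_G_line_le hx h0 h1 t).trans ?_
  gcongr
  rw [norm_div, norm_one, norm_mul, Real.rpow_neg ht.le, ← one_div]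
  refine one_div_le_one_div_of_le (by positivity) ?_
  have a1 := abs_im_le_norm ((σ : ℂ) + t * I)
  have a2 := abs_im_le_norm ((σ : ℂ) + t * I + 1)
  simp only [add_im, ofReal_im, mul_im, ofReal_re, I_im, I_re, one_im, mul_one, mul_zero, zero_add,
    add_zero] at a1 a2
  rw [show (2 : ℝ) = ((2 : ℕ) : ℝ) by norm_num, Real.rpow_natCast, sq]
  gcongr

/-- Moving the part `|Im s| ≤ T` of the Perron integral from `Re s = 1 / log x` to `Re s = -c / ell T`.
The integrand has no pole in between since `Z` has no zero there and `1 / ζ(1 + s)` absorbs the factor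
`1 / s`. -/
theorem contour_bound : ∃ c C : ℝ, 0 < c ∧ c ≤ 1 ∧ 0 < C ∧ ∀ x T : ℝ, 0 < x → 2 ≤ Real.log x → 1 ≤ T →
    |∑ n ∈ Finset.Icc 1 ⌊x⌋₊, (ArithmeticFunction.moebius n : ℝ) / n * (1 - n / x)| ≤
      C * (Real.log x / T + T * Real.exp (-(c / ell T) * Real.log x)) := by
  obtain ⟨c, m, hc, hc2, hm, hZ⟩ := Z_lower
  set e := Real.exp 1 with he
  have he0 : 0 < e := Real.exp_pos 1
  refine ⟨c, 6 * e + 4 * e / m + 4 / m, hc, by linarith, by positivity, fun x T hx hL hT => ?_⟩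
  set L := Real.log x with hLdef
  set b := c / ell T with hb
  have hT0 : 0 < T := by linarith
  have hell := one_le_ell T
  have hb0 : 0 < b := by positivity
  have hb1 : b ≤ 1 / 2 := (div_le_self hc.le hell).trans hc2
  have hL0 : 0 < L := by linarith
  set σ := 1 / L with hσ
  have hσ0 : 0 < σ := by positivity
  have hσ1 : σ ≤ 1 / 2 := one_div_le_one_div_of_le (by norm_num) hL
  have hx0 : (x : ℂ) ≠ 0 := by exact_mod_cast hx.ne'
  have hx1 : 1 < x := by
    by_contra h
    have := Real.log_nonpos hx.le (not_lt.1 h)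
    linarith
  have hxσ : x ^ σ = e := by
    rw [Real.rpow_def_of_pos hx, ← hLdef, hσ, mul_one_div_cancel hL0.ne']
  have hxb : x ^ (-b) = Real.exp (-b * L) := by
    rw [Real.rpow_def_of_pos hx, ← hLdef, mul_comm]
  have hZm : ∀ s : ℂ, -b ≤ s.re → s.re ≤ σ → |s.im| ≤ T → m ≤ ‖Z (1 + s)‖ := by
    intro s h1 h2 h3
    refine hZ _ ?_ (by simp; linarith)
    have : ell (1 + s).im ≤ ell T := by
      unfold ell
      refine Real.log_le_log (by positivity) ?_
      rw [abs_of_pos hT0]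
      simpa using h3
    have h5 : c / ell T ≤ c / ell (1 + s).im :=
      div_le_div_of_nonneg_left hc.le (by linarith [one_le_ell (1 + s).im]) this
    rw [add_re, one_re]
    linarith
  have hrect : DifferentiableOn ℂ (G x) (Set.uIcc (-b) σ ×ℂ Set.uIcc (-T) T) := by
    intro s hs
    rw [mem_reProdIm, Set.uIcc_of_le (by linarith), Set.uIcc_of_le (by linarith)] at hs
    obtain ⟨⟨h1, h2⟩, h3, h4⟩ := hs
    refine DifferentiableAt.differentiableWithinAt ?_
    unfold G
    have hz1 : m ≤ ‖Z (1 + s)‖ := hZm s h1 h2 (abs_le.2 ⟨h3, h4⟩)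
    have hzne : Z (1 + s) ≠ 0 := by
      intro h
      rw [h, norm_zero] at hz1
      linarith
    have hs1 : s + 1 ≠ 0 := by
      intro h
      have := congrArg re h
      simp at this
      linarith
    have hzd : DifferentiableAt ℂ (fun s => Z (1 + s)) s := by
      refine DifferentiableAt.comp s (g := Z) (f := fun s => 1 + s) (Z_differentiableAt ?_) (by fun_prop)
      simp
      linarith
    refine DifferentiableAt.div ?_ ((by fun_prop : DifferentiableAt ℂ (fun s : ℂ => s + 1) s).mul hzd)
      (mul_ne_zero hs1 hzne)
    exact (differentiableAt_id).const_cpow (Or.inl hx0)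
  have hbox := integral_boundary_rect_eq_zero_of_differentiableOn (G x) ⟨-b, -T⟩ ⟨σ, T⟩ hrect
  simp only at hbox
  have hhor : ∀ v : ℝ, |v| = T → ‖∫ u in (-b)..σ, G x ((u : ℂ) + v * I)‖ ≤ e / (T * m) := by
    intro v hv
    have := intervalIntegral.norm_integral_le_of_norm_le_const (a := -b) (b := σ) (C := e / (T * m))
      (f := fun u : ℝ => G x ((u : ℂ) + v * I)) (by
      intro u hu
      rw [Set.uIoc_of_le (by linarith)] at hu
      have hz1 := hZm ((u : ℂ) + v * I) (by simp; linarith [hu.1]) (by simp; exact hu.2)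
        (by simp [hv])
      rw [G, norm_div, norm_mul, norm_cpow_line hx]
      have h6 : x ^ u ≤ e := by
        rw [← hxσ]
        exact Real.rpow_le_rpow_of_exponent_le hx1.le hu.2
      have h7 : T ≤ ‖(u : ℂ) + v * I + 1‖ := by
        have := abs_im_le_norm ((u : ℂ) + v * I + 1)
        simpa [hv] using this
      gcongr)
    refine this.trans ?_
    refine mul_le_of_le_one_right (by positivity) ?_
    rw [abs_of_pos (by linarith)]
    linarith
  have hleft : ‖∫ v in (-T)..T, G x (((-b : ℝ) : ℂ) + v * I)‖ ≤
      Real.exp (-b * L) / (1 / 2 * m) * (2 * T) := by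
    have := intervalIntegral.norm_integral_le_of_norm_le_const (a := -T) (b := T)
      (C := Real.exp (-b * L) / (1 / 2 * m))
      (f := fun v : ℝ => G x (((-b : ℝ) : ℂ) + v * I)) (by
      intro v hv
      rw [Set.uIoc_of_le (by linarith)] at hv
      have hz1 := hZm (((-b : ℝ) : ℂ) + v * I) (by simp) (by simp; linarith)
        (by simp [abs_le, hv.1.le, hv.2])
      rw [G, norm_div, norm_mul, norm_cpow_line hx, hxb]
      have h7 : 1 / 2 ≤ ‖((-b : ℝ) : ℂ) + v * I + 1‖ := by
        have h8 := re_le_norm (((-b : ℝ) : ℂ) + v * I + 1)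
        have h9 : (((-b : ℝ) : ℂ) + v * I + 1).re = -b + 1 := by simp
        rw [h9] at h8
        linarith
      gcongr)
    rwa [show T - -T = 2 * T by ring, abs_of_pos (by linarith)] at this
  have hmid : ‖∫ v in (-T)..T, G x ((σ : ℂ) + v * I)‖ ≤ 2 * (e / (T * m)) +
      Real.exp (-b * L) / (1 / 2 * m) * (2 * T) := by
    have e1 : I • (∫ v in (-T)..T, G x ((σ : ℂ) + v * I)) =
        I • (∫ v in (-T)..T, G x (((-b : ℝ) : ℂ) + v * I)) +
        (∫ u in (-b)..σ, G x ((u : ℂ) + (T : ℝ) * I)) -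
        ∫ u in (-b)..σ, G x ((u : ℂ) + ((-T : ℝ) : ℂ) * I) := by
      linear_combination hbox
    have e2 : ‖I • (∫ v in (-T)..T, G x ((σ : ℂ) + v * I))‖ =
        ‖∫ v in (-T)..T, G x ((σ : ℂ) + v * I)‖ := by rw [norm_smul, norm_I, one_mul]
    rw [← e2, e1]
    refine (norm_sub_le _ _).trans ?_
    have n1 := norm_add_le (I • (∫ v in (-T)..T, G x (((-b : ℝ) : ℂ) + v * I)))
      (∫ u in (-b)..σ, G x ((u : ℂ) + (T : ℝ) * I))
    rw [norm_smul, norm_I, one_mul] at n1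
    have n2 := hhor T (abs_of_pos hT0)
    have n3 := hhor (-T) (by rw [abs_neg, abs_of_pos hT0])
    linarith
  have hall := norm_integral_sub_le hT0 (G_line_integrable hx hσ0 (by linarith))
    (B := x ^ σ * (3 / σ)) (fun t ht => norm_G_tail_le hx hσ0 (by linarith) (hT0.trans ht))
  rw [← perron hσ0 (by linarith) hx, norm_mul, norm_real] at hall
  have hpi : 1 ≤ ‖(2 * Real.pi : ℂ)‖ := by
    rw [norm_mul, norm_real, Real.norm_of_nonneg Real.pi_pos.le]
    simp
    linarith [Real.pi_gt_three]
  have hstart := le_mul_of_one_le_left (norm_nonneg (∑ n ∈ Finset.Icc 1 ⌊x⌋₊,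
    (ArithmeticFunction.moebius n : ℝ) / n * (1 - n / x))) hpi
  rw [← Real.norm_eq_abs]
  refine hstart.trans (hall.trans ?_)
  have f1 : 2 * (x ^ σ * (3 / σ)) / T = 6 * e * (L / T) := by
    rw [hxσ, hσ]
    field_simp
    norm_num
  have f2 : 2 * (e / (T * m)) ≤ 4 * e / m * (L / T) := by
    calc 2 * (e / (T * m)) = (2 * e / m / T) * 1 := by field_simp
      _ ≤ (2 * e / m / T) * (2 * L) := by
        gcongr
        linarith
      _ = _ := by ring
  have f3 : Real.exp (-b * L) / (1 / 2 * m) * (2 * T) = 4 / m * (T * Real.exp (-b * L)) := by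
    field_simp
    norm_num
  have p1 : 0 ≤ 4 / m * (L / T) := by positivity
  have p2 : 0 ≤ (6 * e + 4 * e / m) * (T * Real.exp (-b * L)) := by positivity
  rw [f1]
  rw [f3] at hmid
  linarith

/-- The choice `T = exp (2 d √(log x))`, with `d` a small multiple of `c`, balances the two terms of
`contour_bound`. -/
theorem smooth_bound : ∃ c C : ℝ, 0 < c ∧ 0 < C ∧ ∀ x : ℝ, 0 < x → 2 ≤ Real.log x →
    |∑ n ∈ Finset.Icc 1 ⌊x⌋₊, (ArithmeticFunction.moebius n : ℝ) / n * (1 - n / x)| ≤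
      C * Real.exp (-c * √(Real.log x)) := by
  obtain ⟨c, C, hc, hc1, hC, h⟩ := contour_bound
  set d := c / 12 with hd
  have hd0 : 0 < d := by positivity
  refine ⟨d, C * (2 / d ^ 2 + 1), hd0, by positivity, fun x hx hL => ?_⟩
  set L := Real.log x with hLdef
  set v := √L with hv
  have hv1 : 1 ≤ v := Real.one_le_sqrt.2 (by linarith)
  have hvv : v * v = L := Real.mul_self_sqrt (by linarith)
  set T := Real.exp (2 * d * v) with hT
  have hT1 : 1 ≤ T := Real.one_le_exp (by positivity)
  refine (h x T hx hL hT1).trans ?_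
  rw [mul_assoc]
  refine mul_le_mul_of_nonneg_left ?_ hC.le
  have hell : ell T ≤ 3 * v := by
    have h5 : |T| + 4 ≤ Real.exp 2 * T := by
      have h6 : 5 ≤ Real.exp 2 := by
        have := Real.quadratic_le_exp_of_nonneg (show (0 : ℝ) ≤ 2 by norm_num)
        linarith
      rw [abs_of_pos (by linarith)]
      nlinarith
    have h7 : ell T ≤ 2 + 2 * d * v := by
      unfold ell
      refine (Real.log_le_log (by positivity) h5).trans ?_
      rw [hT, ← Real.exp_add, Real.log_exp]
    have : 2 * d * v ≤ 1 * v := by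
      gcongr
      linarith
    linarith
  have hell0 := one_le_ell T
  have hb : c / 3 * v ≤ c / ell T * L := by
    calc c / 3 * v = c / (3 * v) * L := by
          rw [← hvv]
          field_simp
      _ ≤ _ := by gcongr
  have t1 : L / T ≤ 2 / d ^ 2 * Real.exp (-d * v) := by
    have := Real.quadratic_le_exp_of_nonneg (show 0 ≤ d * v by positivity)
    have h8 : L ≤ 2 / d ^ 2 * Real.exp (d * v) := by
      rw [div_mul_eq_mul_div, le_div_iff₀ (by positivity), ← hvv]
      have : 0 ≤ d * v := by positivity
      nlinarith
    rw [div_le_iff₀ (by positivity), mul_assoc, hT, ← Real.exp_add]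
    ring_nf at h8 ⊢
    exact h8
  have t2 : T * Real.exp (-(c / ell T) * L) ≤ Real.exp (-d * v) := by
    rw [hT, ← Real.exp_add]
    refine Real.exp_le_exp.2 ?_
    have : c = 12 * d := by rw [hd]; ring
    have : 0 ≤ d * v := by positivity
    nlinarith
  linarith

end RoughMoebius

namespace RoughMoebius

/-! ### Removing the smooth weight -/

lemma abs_moebius_div_le {n : ℕ} {x : ℝ} (hx : 0 < x) (hn : x ≤ n) :
    |(ArithmeticFunction.moebius n : ℝ) / n| ≤ 1 / x := by
  have h1 : |(ArithmeticFunction.moebius n : ℝ)| ≤ 1 := by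
    exact_mod_cast ArithmeticFunction.abs_moebius_le_one (n := n)
  rw [abs_div, abs_of_nonneg (Nat.cast_nonneg n : (0 : ℝ) ≤ n)]
  gcongr

lemma Icc_one_eq (N : ℕ) : Finset.Icc 1 N = Finset.Ioc 0 N := by
  ext n
  simp only [Finset.mem_Icc, Finset.mem_Ioc]
  omega

/-- If `B x = ∑ n ≤ x, μ(n) / n * (x - n)`, then `B (x + h) - B x` equals `h ∑ n ≤ x, μ(n) / n` up
to the contribution of `x < n ≤ x + h`, which is trivially small. -/
lemma unsmooth {x h : ℝ} (hx : 0 < x) (hh : 0 < h) :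
    |∑ n ∈ Finset.Icc 1 ⌊x⌋₊, (ArithmeticFunction.moebius n : ℝ) / n| * h ≤
      (x + h) * |∑ n ∈ Finset.Icc 1 ⌊x + h⌋₊,
        (ArithmeticFunction.moebius n : ℝ) / n * (1 - n / (x + h))| +
      x * |∑ n ∈ Finset.Icc 1 ⌊x⌋₊, (ArithmeticFunction.moebius n : ℝ) / n * (1 - n / x)| +
      (h + 1) * (h / x) := by
  set a : ℕ → ℝ := fun n => (ArithmeticFunction.moebius n : ℝ) / n with ha
  have key : ∀ z : ℝ, 0 < z → z * ∑ n ∈ Finset.Icc 1 ⌊z⌋₊, a n * (1 - n / z) =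
      ∑ n ∈ Finset.Icc 1 ⌊z⌋₊, a n * (z - n) := by
    intro z hz
    rw [Finset.mul_sum]
    refine Finset.sum_congr rfl fun n _ => ?_
    field_simp
  have hfl : ⌊x⌋₊ ≤ ⌊x + h⌋₊ := Nat.floor_mono (by linarith)
  have hsplit := Finset.sum_Ioc_consecutive (fun n : ℕ => a n * (x + h - n)) (Nat.zero_le _) hfl
  have e1 : ∑ n ∈ Finset.Icc 1 ⌊x⌋₊, a n * (x + h - n) =
      ∑ n ∈ Finset.Icc 1 ⌊x⌋₊, a n * (x - n) + (∑ n ∈ Finset.Icc 1 ⌊x⌋₊, a n) * h := by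
    rw [Finset.sum_mul, ← Finset.sum_add_distrib]
    exact Finset.sum_congr rfl fun n _ => by ring
  rw [← Icc_one_eq, ← Icc_one_eq, e1, ← key x hx, ← key (x + h) (by linarith)] at hsplit
  have htail : |∑ n ∈ Finset.Ioc ⌊x⌋₊ ⌊x + h⌋₊, a n * (x + h - n)| ≤ (h + 1) * (h / x) := by
    have hb : ∀ n ∈ Finset.Ioc ⌊x⌋₊ ⌊x + h⌋₊, |a n * (x + h - n)| ≤ h / x := by
      intro n hn
      rw [Finset.mem_Ioc] at hn
      have h1 : x < n := Nat.lt_of_floor_lt hn.1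
      have h2 : (n : ℝ) ≤ x + h := (Nat.le_floor_iff (by linarith)).1 hn.2
      have h3 := abs_moebius_div_le hx h1.le
      rw [abs_mul, abs_of_nonneg (by linarith : 0 ≤ x + h - n)]
      calc |a n| * (x + h - n) ≤ 1 / x * h := by
            refine mul_le_mul h3 (by linarith) (by linarith) (by positivity)
        _ = h / x := by ring
    refine (Finset.abs_sum_le_sum_abs _ _).trans ((Finset.sum_le_card_nsmul _ _ _ hb).trans ?_)
    rw [nsmul_eq_mul, Nat.card_Ioc, Nat.cast_sub hfl]
    have g1 := Nat.floor_le (show 0 ≤ x + h by linarith)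
    have g2 := Nat.lt_floor_add_one x
    refine mul_le_mul_of_nonneg_right (by linarith) (by positivity)
  have e2 : (∑ n ∈ Finset.Icc 1 ⌊x⌋₊, a n) * h =
      (x + h) * ∑ n ∈ Finset.Icc 1 ⌊x + h⌋₊, a n * (1 - n / (x + h)) -
      x * ∑ n ∈ Finset.Icc 1 ⌊x⌋₊, a n * (1 - n / x) -
      ∑ n ∈ Finset.Ioc ⌊x⌋₊ ⌊x + h⌋₊, a n * (x + h - n) := by linarith
  rw [← abs_of_pos hh, ← abs_mul, abs_of_pos hh, e2]
  refine (abs_sub _ _).trans ?_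
  refine add_le_add ((abs_sub _ _).trans ?_) htail
  rw [abs_mul, abs_mul, abs_of_pos hx, abs_of_pos (by linarith : 0 < x + h)]

/-- The case without any sieving condition. -/
theorem moebius_div_sum_bound : ∃ c C : ℝ, 0 < c ∧ c ≤ 1 / 4 ∧ 0 < C ∧ ∀ x : ℝ, 1 ≤ x →
    |∑ n ∈ Finset.Icc 1 ⌊x⌋₊, (ArithmeticFunction.moebius n : ℝ) / n| ≤
      C * Real.exp (-c * √(Real.log x)) := by
  obtain ⟨c, C, hc, hC, h⟩ := smooth_bound
  set d := min (c / 2) (1 / 4) with hd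
  have hd0 : 0 < d := by positivity
  have hd1 : d ≤ 1 / 4 := min_le_right _ _
  have hdc : d ≤ c / 2 := min_le_left _ _
  refine ⟨d, 3 * C + 2 + Real.exp 4, hd0, hd1, by positivity, fun x hx => ?_⟩
  have hx0 : 0 < x := by linarith
  set L := Real.log x with hL
  have hL0 : 0 ≤ L := Real.log_nonneg hx
  have hxL : x = Real.exp L := (Real.exp_log hx0).symm
  set v := √L with hv
  have hv0 : 0 ≤ v := Real.sqrt_nonneg _
  have hvv : v * v = L := Real.mul_self_sqrt hL0
  rcases lt_or_ge L 2 with h2 | h2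
  · have hb : |∑ n ∈ Finset.Icc 1 ⌊x⌋₊, (ArithmeticFunction.moebius n : ℝ) / n| ≤ Real.exp 2 := by
      refine (Finset.abs_sum_le_sum_abs _ _).trans ((Finset.sum_le_card_nsmul _ _ 1 ?_).trans ?_)
      · intro n hn
        have : (1 : ℝ) ≤ n := by exact_mod_cast (Finset.mem_Icc.1 hn).1
        simpa using abs_moebius_div_le one_pos this
      · rw [nsmul_eq_mul, mul_one, Nat.card_Icc, Nat.add_sub_cancel]
        refine (Nat.floor_le hx0.le).trans ?_
        rw [hxL]
        exact Real.exp_le_exp.2 h2.le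
    refine hb.trans ?_
    have h3 : Real.exp 2 ≤ Real.exp 4 * Real.exp (-d * v) := by
      rw [← Real.exp_add]
      refine Real.exp_le_exp.2 ?_
      nlinarith
    have : 0 ≤ (3 * C + 2) * Real.exp (-d * v) := by positivity
    linarith
  · have hv1 : 1 ≤ v := Real.one_le_sqrt.2 (by linarith)
    -- The increment `h = x δ`, with `δ` the square root of the saving, balances the error terms.
    set δ := Real.exp (-(c / 2) * v) with hδ
    have hδ0 : 0 < δ := Real.exp_pos _
    have hδ1 : δ ≤ 1 := Real.exp_le_one_iff.2 (by nlinarith)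
    have hE : Real.exp (-c * v) = δ * δ := by
      rw [hδ, ← Real.exp_add]
      ring_nf
    have hh : 0 < x * δ := by positivity
    have hlog : L ≤ Real.log (x + x * δ) := Real.log_le_log hx0 (by linarith)
    have b1 := h x hx0 h2
    have b2 := h (x + x * δ) (by positivity) (by linarith)
    have b3 : C * Real.exp (-c * √(Real.log (x + x * δ))) ≤ C * (δ * δ) := by
      rw [← hE]
      have : v ≤ √(Real.log (x + x * δ)) := Real.sqrt_le_sqrt hlog
      gcongr C * Real.exp ?_
      nlinarith
    rw [hE] at b1
    have hu := unsmooth hx0 hh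
    have hδd : δ ≤ Real.exp (-d * v) := Real.exp_le_exp.2 (by nlinarith)
    have hxi : 1 / x ≤ Real.exp (-d * v) := by
      rw [one_div, hxL, ← Real.exp_neg]
      refine Real.exp_le_exp.2 ?_
      nlinarith
    have hmain : |∑ n ∈ Finset.Icc 1 ⌊x⌋₊, (ArithmeticFunction.moebius n : ℝ) / n| * (x * δ) ≤
        (3 * C * δ + δ + 1 / x) * (x * δ) := by
      refine hu.trans ?_
      have i1 : (x + x * δ) * |∑ n ∈ Finset.Icc 1 ⌊x + x * δ⌋₊,
          (ArithmeticFunction.moebius n : ℝ) / n * (1 - n / (x + x * δ))| ≤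
          (x + x * 1) * (C * (δ * δ)) := by
        gcongr
        exact b2.trans b3
      have i2 := mul_le_mul_of_nonneg_left b1 hx0.le
      have i3 : (x * δ + 1) * (x * δ / x) = (δ + 1 / x) * (x * δ) := by field_simp
      rw [i3]
      linarith
    have := le_of_mul_le_mul_right hmain hh
    have p : 0 ≤ Real.exp 4 * Real.exp (-d * v) := by positivity
    have q : 3 * C * δ ≤ 3 * C * Real.exp (-d * v) := by gcongr
    linarith

/-! ### Sieving by finitely many primes -/

/-- The sum of `μ(n) / n` over `1 ≤ n ≤ x` divisible by no element of `P`. -/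
noncomputable def S (P : Finset ℕ) (x : ℝ) : ℝ :=
  ∑ n ∈ (Finset.Icc 1 ⌊x⌋₊).filter (fun n => ∀ p ∈ P, ¬ p ∣ n),
    (ArithmeticFunction.moebius n : ℝ) / n

lemma moebius_prime_mul {p : ℕ} (hp : p.Prime) (m : ℕ) :
    ArithmeticFunction.moebius (p * m) = if p ∣ m then 0 else -ArithmeticFunction.moebius m := by
  split_ifs with h
  · refine ArithmeticFunction.moebius_eq_zero_of_not_squarefree fun hsq => ?_
    have := hsq p (Nat.mul_dvd_mul_left p h)
    exact hp.one_lt.ne' (Nat.isUnit_iff.1 this)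
  · rw [ArithmeticFunction.isMultiplicative_moebius.map_mul_of_coprime
      ((Nat.Prime.coprime_iff_not_dvd hp).2 h), ArithmeticFunction.moebius_apply_prime hp]
    ring

/-- Splitting according to divisibility by `p` and using `μ(p m) = -μ(m)` for `p ∤ m`. -/
lemma S_insert {P : Finset ℕ} (hP : ∀ q ∈ P, q.Prime) {p : ℕ} (hp : p.Prime) (hpP : p ∉ P) (x : ℝ) :
    S (insert p P) x = S P x + 1 / p * S (insert p P) (x / p) := by
  set a : ℕ → ℝ := fun n => (ArithmeticFunction.moebius n : ℝ) / n with ha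
  have hp0 : (p : ℝ) ≠ 0 := by exact_mod_cast hp.ne_zero
  have h1 : S P x = S (insert p P) x +
      ∑ n ∈ (Finset.Icc 1 ⌊x⌋₊).filter (fun n => (∀ q ∈ P, ¬ q ∣ n) ∧ p ∣ n), a n := by
    unfold S
    rw [← Finset.sum_filter_add_sum_filter_not _ (fun n => ¬ p ∣ n), Finset.filter_filter,
      Finset.filter_filter]
    congr 1
    · refine Finset.sum_congr (Finset.filter_congr fun n _ => ?_) fun _ _ => rfl
      rw [Finset.forall_mem_insert, and_comm]
    · refine Finset.sum_congr (Finset.filter_congr fun n _ => ?_) fun _ _ => rfl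
      rw [not_not]
  have h2 : ∑ n ∈ (Finset.Icc 1 ⌊x⌋₊).filter (fun n => (∀ q ∈ P, ¬ q ∣ n) ∧ p ∣ n), a n =
      ∑ m ∈ (Finset.Icc 1 ⌊x / p⌋₊).filter (fun m => ∀ q ∈ P, ¬ q ∣ m), a (p * m) := by
    symm
    refine Finset.sum_nbij' (fun m => p * m) (fun n => n / p) ?_ ?_ ?_ ?_ fun _ _ => rfl
    · intro m hm
      simp only [Finset.mem_filter, Finset.mem_Icc, Nat.floor_div_natCast] at hm ⊢
      refine ⟨⟨Nat.mul_pos hp.pos hm.1.1, ?_⟩, ?_, dvd_mul_right _ _⟩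
      · rw [mul_comm]
        exact (Nat.le_div_iff_mul_le hp.pos).1 hm.1.2
      · intro q hq hd
        rcases (hP q hq).dvd_mul.1 hd with h | h
        · rw [(Nat.prime_dvd_prime_iff_eq (hP q hq) hp).1 h] at hq
          exact hpP hq
        · exact hm.2 q hq h
    · intro n hn
      simp only [Finset.mem_filter, Finset.mem_Icc, Nat.floor_div_natCast] at hn ⊢
      obtain ⟨⟨h1, h2⟩, h3, h4⟩ := hn
      refine ⟨⟨Nat.div_pos (Nat.le_of_dvd h1 h4) hp.pos, Nat.div_le_div_right h2⟩, ?_⟩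
      exact fun q hq hd => h3 q hq (hd.trans (Nat.div_dvd_of_dvd h4))
    · intro m _
      exact Nat.mul_div_cancel_left m hp.pos
    · intro n hn
      exact Nat.mul_div_cancel' (Finset.mem_filter.1 hn).2.2
  have h3 : ∑ m ∈ (Finset.Icc 1 ⌊x / p⌋₊).filter (fun m => ∀ q ∈ P, ¬ q ∣ m), a (p * m) =
      -(1 / p * S (insert p P) (x / p)) := by
    have hS : S (insert p P) (x / p) = ∑ m ∈ ((Finset.Icc 1 ⌊x / p⌋₊).filter
        (fun m => ∀ q ∈ P, ¬ q ∣ m)).filter (fun m => ¬ p ∣ m), a m := by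
      unfold S
      rw [Finset.filter_filter]
      refine Finset.sum_congr (Finset.filter_congr fun n _ => ?_) fun _ _ => rfl
      rw [Finset.forall_mem_insert, and_comm]
    rw [hS, Finset.sum_filter (fun m => ¬ p ∣ m), Finset.mul_sum, ← Finset.sum_neg_distrib]
    refine Finset.sum_congr rfl fun m _ => ?_
    simp only [ha, moebius_prime_mul hp]
    by_cases h : p ∣ m
    · simp [h]
    · simp only [h, if_false, not_false_eq_true, if_true]
      push_cast
      rw [neg_div, ← div_div, div_right_comm]
      ring
  rw [h1, h2, h3]
  ring

lemma S_eq_zero (P : Finset ℕ) {x : ℝ} (hx : x < 1) : S P x = 0 := by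
  have : ⌊x⌋₊ = 0 := Nat.floor_eq_zero.2 hx
  simp [S, this]

/-- The loss `exp (c √(log p))` in passing from `x` to `x / p` is outweighed by the factor `1 / p`. -/
lemma exp_sqrt_log_div_le {p : ℕ} (hp : 2 ≤ p) {c : ℝ} (hc : c ≤ 1 / 4) :
    1 / (p : ℝ) * Real.exp (c * √(Real.log p)) ≤ 3 / 4 := by
  have hp2 : (2 : ℝ) ≤ p := by exact_mod_cast hp
  have hp0 : (0 : ℝ) < p := by linarith
  set l := Real.log p with hl
  have hl2 : 1 / 4 ≤ l := by
    have := Real.log_two_gt_d9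
    have := Real.log_le_log (by norm_num) hp2
    linarith
  have hv : 1 / 2 ≤ √l := Real.le_sqrt_of_sq_le (by linarith)
  have hvv : √l * √l = l := Real.mul_self_sqrt (by linarith)
  have hpe : 1 / (p : ℝ) = Real.exp (-l) := by
    rw [Real.exp_neg, hl, Real.exp_log hp0, one_div]
  set q := Real.exp (-(l / 2)) with hq
  have hqq : q * q = 1 / p := by
    rw [hq, ← Real.exp_add, hpe]
    ring_nf
  have hq0 : 0 < q := Real.exp_pos _
  have hle : 1 / (p : ℝ) ≤ 1 / 2 := one_div_le_one_div_of_le (by norm_num) hp2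
  have : 1 / (p : ℝ) * Real.exp (c * √l) ≤ q := by
    rw [hpe, ← Real.exp_add]
    refine Real.exp_le_exp.2 ?_
    nlinarith
  nlinarith

/-- One more sieving prime costs a factor `4`: the recursion `S_insert` closes since
`C + (3 / 4) * 4 C = 4 C`. -/
lemma S_insert_bound {P : Finset ℕ} (hP : ∀ q ∈ P, q.Prime) {p : ℕ} (hp : p.Prime) (hpP : p ∉ P)
    {c C : ℝ} (hc0 : 0 < c) (hc : c ≤ 1 / 4) (hC : 0 < C)
    (h : ∀ x : ℝ, 1 ≤ x → |S P x| ≤ C * Real.exp (-c * √(Real.log x))) (x : ℝ) (hx : 1 ≤ x) :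
    |S (insert p P) x| ≤ 4 * C * Real.exp (-c * √(Real.log x)) := by
  have hp2 : (2 : ℝ) ≤ p := by exact_mod_cast hp.two_le
  have hp0 : (0 : ℝ) < p := by linarith
  obtain ⟨k, hk⟩ := pow_unbounded_of_one_lt x (one_lt_two)
  induction k generalizing x with
  | zero => simp at hk; linarith
  | succ k ih =>
    rw [S_insert hP hp hpP]
    refine (abs_add_le _ _).trans ?_
    rw [abs_mul, abs_of_pos (by positivity : 0 < 1 / (p : ℝ))]
    have h1 := h x hx
    set E := Real.exp (-c * √(Real.log x)) with hE
    have hE0 : 0 < E := Real.exp_pos _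
    rcases lt_or_ge (x / p) 1 with hlt | hge
    · rw [S_eq_zero _ hlt, abs_zero, mul_zero, add_zero]
      nlinarith
    · have h2 := ih (x / p) hge (by
        rw [div_lt_iff₀ hp0]
        have : (0 : ℝ) < 2 ^ k := by positivity
        rw [pow_succ] at hk
        nlinarith)
      have hlog : Real.log x = Real.log (x / p) + Real.log p := by
        rw [Real.log_div (by linarith) (by linarith)]
        ring
      have hsq : √(Real.log x) ≤ √(Real.log (x / p)) + √(Real.log p) := by
        have g1 := Real.sq_sqrt (Real.log_nonneg hge)
        have g2 := Real.sq_sqrt (Real.log_nonneg (by linarith : (1 : ℝ) ≤ p))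
        have g3 := mul_nonneg (Real.sqrt_nonneg (Real.log (x / p))) (Real.sqrt_nonneg (Real.log p))
        rw [Real.sqrt_le_left (by positivity), hlog]
        nlinarith
      have h3 : Real.exp (-c * √(Real.log (x / p))) ≤ Real.exp (c * √(Real.log p)) * E := by
        rw [hE, ← Real.exp_add]
        refine Real.exp_le_exp.2 ?_
        nlinarith
      have h4 := exp_sqrt_log_div_le hp.two_le hc
      have h5 : 1 / (p : ℝ) * |S (insert p P) (x / p)| ≤ 3 * C * E := by
        calc 1 / (p : ℝ) * |S (insert p P) (x / p)|
            ≤ 1 / (p : ℝ) * (4 * C * (Real.exp (c * √(Real.log p)) * E)) := by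
              gcongr
              exact h2.trans (by gcongr)
          _ = (1 / (p : ℝ) * Real.exp (c * √(Real.log p))) * (4 * C * E) := by ring
          _ ≤ 3 / 4 * (4 * C * E) := by gcongr
          _ = _ := by ring
      linarith

lemma S_bound : ∃ c : ℝ, 0 < c ∧ ∀ P : Finset ℕ, (∀ q ∈ P, q.Prime) → ∃ C : ℝ, 0 < C ∧
    ∀ x : ℝ, 1 ≤ x → |S P x| ≤ C * Real.exp (-c * √(Real.log x)) := by
  obtain ⟨c, C, hc0, hc, hC, h⟩ := moebius_div_sum_bound
  refine ⟨c, hc0, fun P => ?_⟩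
  induction P using Finset.induction_on with
  | empty =>
    intro _
    exact ⟨C, hC, fun x hx => by simpa [S] using h x hx⟩
  | insert p P hpP ih =>
    intro hP
    obtain ⟨D, hD, hb⟩ := ih fun q hq => hP q (Finset.mem_insert_of_mem hq)
    exact ⟨4 * D, by positivity, S_insert_bound (fun q hq => hP q (Finset.mem_insert_of_mem hq))
      (hP p (Finset.mem_insert_self p P)) hpP hc0 hc hD hb⟩

end RoughMoebius

theorem moebius_div_sum_rough_bound (y : ℝ) (hy : 1 ≤ y) :
    ∃ C > 0, ∃ c > 0, ∀ x : ℝ, 2 ≤ x →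
      |∑ n ∈ (Finset.Icc 1 ⌊x⌋₊).filter (fun n => ∀ p : ℕ, p ∈ n.primeFactors → y < (p : ℝ)),
          (ArithmeticFunction.moebius n : ℝ) / n|
        ≤ C * Real.exp (-c * Real.sqrt (Real.log x)) := by
  obtain ⟨c, hc, h⟩ := RoughMoebius.S_bound
  obtain ⟨C, hC, hb⟩ := h ((Finset.range (⌊y⌋₊ + 1)).filter Nat.Prime)
    fun q hq => (Finset.mem_filter.1 hq).2
  refine ⟨C, hC, c, hc, fun x hx => ?_⟩
  have hS := hb x (by linarith)
  unfold RoughMoebius.S at hS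
  convert hS using 3
  refine Finset.filter_congr fun n hn => ?_
  have hn0 : n ≠ 0 := by have := (Finset.mem_Icc.1 hn).1; omega
  simp only [Finset.mem_filter, Finset.mem_range, Nat.mem_primeFactors]
  constructor
  · rintro h1 p ⟨hp, hpp⟩ hd
    have h2 := h1 p ⟨hpp, hd, hn0⟩
    have h3 : (p : ℝ) ≤ y := (Nat.le_floor_iff (by linarith)).1 (by omega)
    linarith
  · rintro h1 p ⟨hpp, hd, _⟩
    by_contra hle
    exact h1 p ⟨by have := Nat.le_floor (not_lt.1 hle); omega, hpp⟩ hd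
end

section
/- For each fixed real y ≥ 1, the sum ∑_{1 ≤ n ≤ x, every prime factor of n exceeds y} μ(n)/n tends to 0 as x → ∞. -/
/-!
The sum in question is the partial sum at `x` of the Dirichlet series of the coefficients
`a(n) = μ(n) 1[n is y-rough]` at `s = 1`. For `Re s > 1`, Euler products give
`∑ a(n) n^(-s) = 1 / (ζ(s) ∏_{p ≤ y} (1 - p^(-s)))` (`LSeries_roughMoebius_mul`).

Put `g(t) = ∑_{n ≤ e^t} a(n)/n` (`roughSum`). Partial summation identifies the Laplace transform of
`g` at `s`, for `Re s > 0`, with `1 / (s ζ(1 + s) ∏_{p ≤ y} (1 - p^(-1-s)))` (`laplace_roughSum`).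
As `ζ` has a simple pole at `1` and no zeros on `Re s ≥ 1`, this extends continuously to
`Re s ≥ 0` (`continuousOn_laplaceExt`).

The conclusion `g(t) → 0` then follows from a Tauberian theorem (`tauberian`). Take a compactly
supported smooth `φ` with `φ(0) = 1` and `K = 𝓕 φ`. By self-adjointness of the Fourier transform,
`∫ g(v + T) K(v) dv` is the Fourier transform at `-T` of `φ` times the boundary values of the
Laplace transform, so it tends to `0` as `T → ∞` by the Riemann–Lebesgue lemma. On the other hand
`g` is slowly oscillating, since `|g(t') - g(t)| ≤ |t' - t| + o(1)`, and `∫ K = φ(0) = 1`; so the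
convolution is within `∫ |v| |K(v)| dv + o(1)` of `g(T)`, and rescaling `φ` makes that integral
arbitrarily small.
-/

open Finset Filter
open scoped FourierTransform SchwartzMap

/-! ### A Tauberian theorem for slowly oscillating functions -/

/-- Approximate identities, with small first absolute moment, whose Fourier transforms have compact
support; obtained by rescaling a smooth bump function. -/
lemma exists_fourier_kernel {ε : ℝ} (hε : 0 < ε) :
    ∃ φ : ℝ → ℂ, Continuous φ ∧ HasCompactSupport φ ∧ MeasureTheory.Integrable (𝓕 φ) ∧
      MeasureTheory.Integrable (fun v => |v| * ‖𝓕 φ v‖) ∧ ∫ v, 𝓕 φ v = 1 ∧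
      ∫ v, |v| * ‖𝓕 φ v‖ ≤ ε := by
  let b : ContDiffBump (0 : ℝ) := ⟨1, 2, one_pos, one_lt_two⟩
  have hbc : HasCompactSupport (fun x => (b x : ℂ)) := b.hasCompactSupport.comp_left Complex.ofReal_zero
  have hbs : ContDiff ℝ (⊤ : ℕ∞) (fun x => (b x : ℂ)) := Complex.ofRealCLM.contDiff.comp b.contDiff
  let ψ : 𝓢(ℝ, ℂ) := hbc.toSchwartzMap hbs
  let K : 𝓢(ℝ, ℂ) := 𝓕 ψ
  have hK : ∀ x, K x = 𝓕 (fun x => (b x : ℂ)) x := fun x => by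
    rw [show K = 𝓕 ψ from rfl, SchwartzMap.fourier_coe]; rfl
  have hKi : MeasureTheory.Integrable (fun v => K v) := K.integrable
  have hKi1 : MeasureTheory.Integrable (fun v : ℝ => |v| * ‖K v‖) := by
    simpa using K.integrable_pow_mul MeasureTheory.volume 1
  set C := ∫ v : ℝ, |v| * ‖K v‖ with hC
  have hC0 : 0 ≤ C := MeasureTheory.integral_nonneg fun v => by positivity
  set δ := ε / (C + 1) with hδ
  have hδ0 : 0 < δ := by positivity
  have hF : ∀ v, 𝓕 (fun ξ => (b (δ * ξ) : ℂ)) v = (δ⁻¹ : ℝ) * K (δ⁻¹ * v) := by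
    intro v
    rw [hK, Real.fourier_real_eq, Real.fourier_real_eq]
    have := MeasureTheory.Measure.integral_comp_mul_left
      (fun u : ℝ => Real.fourierChar (-(u * (δ⁻¹ * v))) • (b u : ℂ)) δ
    rw [abs_of_pos (by positivity)] at this
    rw [← Complex.real_smul, ← this]
    congr 1; ext u
    congr 3; field_simp
  have hcont : Continuous (fun ξ => (b (δ * ξ) : ℂ)) := by
    have := b.continuous
    fun_prop
  have hcs : HasCompactSupport (fun ξ => (b (δ * ξ) : ℂ)) :=
    hbc.comp_homeomorph (Homeomorph.mulLeft₀ δ hδ0.ne')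
  have hFi : MeasureTheory.Integrable (𝓕 (fun ξ => (b (δ * ξ) : ℂ))) := by
    rw [funext hF]
    exact (hKi.comp_mul_left' (inv_ne_zero hδ0.ne')).const_mul _
  have hE : (fun v => |v| * ‖𝓕 (fun ξ => (b (δ * ξ) : ℂ)) v‖) =
      fun v => (fun u => |u| * ‖K u‖) (δ⁻¹ * v) := by
    ext v
    rw [hF]
    simp only [norm_mul, Complex.norm_real, Real.norm_eq_abs, abs_mul]
    ring
  refine ⟨fun ξ => (b (δ * ξ) : ℂ), hcont, hcs, hFi, ?_, ?_, ?_⟩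
  · rw [hE]
    exact hKi1.comp_mul_left' (inv_ne_zero hδ0.ne')
  · have := congrFun (hcont.fourierInv_fourier_eq (hcont.integrable_of_hasCompactSupport hcs) hFi) 0
    rw [Real.fourierInv_eq] at this
    have hb0 : b 0 = 1 := b.one_of_mem_closedBall (by simp [b])
    simpa [hb0] using this
  · rw [hE, MeasureTheory.Measure.integral_comp_mul_left (fun u => |u| * ‖K u‖), inv_inv, abs_of_pos hδ0, ← hC, hδ,
      smul_eq_mul, div_mul_eq_mul_div, div_le_iff₀ (by positivity)]
    nlinarith

section Tauberian

open MeasureTheory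

lemma integrable_mul_exp_of_linear_growth {g : ℝ → ℂ} (hm : Measurable g)
    (hneg : ∀ t < 0, g t = 0) (hlin : ∀ t, ‖g t‖ ≤ 1 + |t|) {σ : ℝ} (hσ : 0 < σ) :
    Integrable (fun t => g t * Complex.exp (-(σ * t))) := by
  have h1 : IntegrableOn (fun t : ℝ => (1 + 2 / σ) * Real.exp (-(σ / 2) * t)) (Set.Ici 0) :=
    ((integrableOn_Ici_iff_integrableOn_Ioi (by finiteness)).mpr
      (exp_neg_integrableOn_Ioi 0 (half_pos hσ))).const_mul _
  refine (h1.integrable_indicator measurableSet_Ici).mono'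
    (by fun_prop) (Eventually.of_forall fun t => ?_)
  by_cases ht : t < 0
  · simp [hneg t ht, ht]
  · push Not at ht
    have h2 : σ / 2 * t + 1 ≤ Real.exp (σ / 2 * t) := Real.add_one_le_exp _
    have h3 : 1 + t ≤ (1 + 2 / σ) * Real.exp (σ / 2 * t) := by
      have h4 : t ≤ 2 / σ * Real.exp (σ / 2 * t) := by
        rw [div_mul_eq_mul_div, le_div_iff₀ hσ]; linarith
      have : 0 ≤ σ / 2 * t := by positivity
      linarith
    have h5 := hlin t
    rw [abs_of_nonneg ht] at h5
    rw [Set.indicator_of_mem (Set.mem_Ici.mpr ht), norm_mul, Complex.norm_exp]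
    have h6 : (-((σ : ℂ) * t)).re = -(σ / 2) * t + -(σ / 2 * t) := by
      simp; ring
    rw [h6, Real.exp_add, Real.exp_neg (σ / 2 * t)]
    calc ‖g t‖ * (Real.exp (-(σ / 2) * t) * (Real.exp (σ / 2 * t))⁻¹)
        ≤ ((1 + 2 / σ) * Real.exp (σ / 2 * t)) *
          (Real.exp (-(σ / 2) * t) * (Real.exp (σ / 2 * t))⁻¹) := by
          gcongr; exact h5.trans h3
      _ = _ := by field_simp

/-- Modulation becomes translation under the Fourier transform. -/
lemma fourier_char_mul (φ : ℝ → ℂ) (T t : ℝ) :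
    𝓕 (fun ξ : ℝ => (Real.fourierChar (ξ * T) : ℂ) * φ ξ) t = 𝓕 φ (t - T) := by
  rw [Real.fourier_real_eq, Real.fourier_real_eq]
  congr 1; ext ξ
  rw [Circle.smul_def, Circle.smul_def, smul_eq_mul, smul_eq_mul, ← mul_assoc, ← Circle.coe_mul,
    ← AddChar.map_add_eq_mul]
  congr 3; ring

/-- Parseval's formula between `g` and a translate of `𝓕 φ`. Since `g` itself need not be
integrable, the formula is proved for `g t * exp (-σ t)` and then `σ` tends to `0` from above. -/
lemma convolution_identity {g : ℝ → ℂ} (hm : Measurable g)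
    (hneg : ∀ t < 0, g t = 0) (hlin : ∀ t, ‖g t‖ ≤ 1 + |t|) {G : ℂ → ℂ}
    (hG : ContinuousOn G {s | 0 ≤ s.re})
    (hL : ∀ s : ℂ, 0 < s.re → ∫ t : ℝ, g t * Complex.exp (-(s * t)) = G s)
    {φ : ℝ → ℂ} (hφ : Continuous φ) (hφc : HasCompactSupport φ)
    (hK : Integrable (𝓕 φ)) (hK1 : Integrable (fun v => |v| * ‖𝓕 φ v‖)) (T : ℝ) :
    ∫ t, g t * 𝓕 φ (t - T) =
      ∫ ξ : ℝ, (Real.fourierChar (ξ * T) : ℂ) * (φ ξ * G (2 * Real.pi * ξ * Complex.I)) := by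
  -- `max σ 0` makes the parametric integral continuous in `σ` on all of `ℝ`.
  let H : ℝ → ℂ := fun σ => ∫ ξ : ℝ, (Real.fourierChar (ξ * T) : ℂ) *
      (φ ξ * G ((max σ 0 : ℝ) + 2 * Real.pi * ξ * Complex.I))
  have hH : Continuous H := by
    have hGc : Continuous (fun q : ℝ × ℝ =>
        G ((max q.1 0 : ℝ) + 2 * Real.pi * q.2 * Complex.I)) := by
      refine hG.comp_continuous (by fun_prop) fun q => ?_
      simp
    have := continuous_parametric_integral_of_continuous (μ := (volume : Measure ℝ))
      (f := fun σ ξ : ℝ => (Real.fourierChar (ξ * T) : ℂ) *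
      (φ ξ * G ((max σ 0 : ℝ) + 2 * Real.pi * ξ * Complex.I))) (by
        simp only [Function.uncurry_def]
        have h1 : Continuous fun q : ℝ × ℝ => (Real.fourierChar (q.2 * T) : ℂ) :=
          continuous_subtype_val.comp (Real.continuous_fourierChar.comp (by fun_prop))
        exact h1.mul ((hφ.comp continuous_snd).mul hGc)) hφc.isCompact
    refine this.congr fun σ => ?_
    refine setIntegral_eq_integral_of_forall_compl_eq_zero fun ξ hξ => ?_
    simp [image_eq_zero_of_notMem_tsupport hξ]
  have hHσ : ∀ σ : ℝ, 0 < σ →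
      ∫ t : ℝ, (g t * Complex.exp (-(σ * t))) * 𝓕 φ (t - T) = H σ := by
    intro σ hσ
    have hi := integrable_mul_exp_of_linear_growth hm hneg hlin hσ
    have hψ : Integrable (fun ξ : ℝ => (Real.fourierChar (ξ * T) : ℂ) * φ ξ) := by
      have h1 : Continuous fun q : ℝ => (Real.fourierChar (q * T) : ℂ) :=
          continuous_subtype_val.comp (Real.continuous_fourierChar.comp (by fun_prop))
      exact (h1.mul hφ).integrable_of_hasCompactSupport hφc.mul_left
    have := VectorFourier.integral_fourierIntegral_smul_eq_flip (L := innerₗ ℝ)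
      (μ := volume) (ν := volume) Real.continuous_fourierChar continuous_inner hi hψ
    rw [flip_innerₗ] at this
    have e1 : ∀ ψ : ℝ → ℂ, VectorFourier.fourierIntegral Real.fourierChar volume (innerₗ ℝ) ψ
      = 𝓕 ψ := fun ψ => rfl
    simp only [e1, smul_eq_mul, fourier_char_mul] at this
    rw [← this]
    refine integral_congr_ae (Eventually.of_forall fun ξ => ?_)
    simp only
    have e2 : 𝓕 (fun t : ℝ => g t * Complex.exp (-(σ * t))) ξ =
        G ((max σ 0 : ℝ) + 2 * Real.pi * ξ * Complex.I) := by
      rw [← hL _ (by simp [hσ]), Real.fourier_real_eq_integral_exp_smul, max_eq_left hσ.le]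
      congr 1; ext t
      rw [smul_eq_mul, mul_left_comm, ← Complex.exp_add]
      congr 2; push_cast; ring
    rw [e2]; ring
  have hlim1 : Tendsto (fun σ : ℝ => ∫ t : ℝ, (g t * Complex.exp (-(σ * t))) * 𝓕 φ (t - T))
      (nhdsWithin 0 (Set.Ioi 0)) (nhds (H 0)) :=
    ((hH.tendsto 0).mono_left nhdsWithin_le_nhds).congr'
      (eventually_nhdsWithin_of_forall fun σ hσ => (hHσ σ hσ).symm)
  have hbd : Integrable (fun t : ℝ => (1 + |T|) * ‖𝓕 φ (t - T)‖ + |t - T| * ‖𝓕 φ (t - T)‖) :=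
    ((hK.comp_sub_right T).norm.const_mul _).add (hK1.comp_sub_right T)
  have hlim2 : Tendsto (fun σ : ℝ => ∫ t : ℝ, (g t * Complex.exp (-(σ * t))) * 𝓕 φ (t - T))
      (nhdsWithin 0 (Set.Ioi 0)) (nhds (∫ t : ℝ, g t * 𝓕 φ (t - T))) := by
    refine tendsto_integral_filter_of_dominated_convergence _ ?_ ?_ hbd ?_
    · refine Eventually.of_forall fun σ => ?_
      have h1 := (hK.comp_sub_right T).aestronglyMeasurable
      exact (show Measurable (fun t : ℝ => g t * Complex.exp (-(σ * t))) by
        fun_prop).aestronglyMeasurable.mul h1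
    · refine eventually_nhdsWithin_of_forall fun σ hσ => Eventually.of_forall fun t => ?_
      rw [← add_mul, norm_mul]
      gcongr
      by_cases ht : t < 0
      · rw [hneg t ht]; simp; positivity
      · push Not at ht
        have h1 : ‖Complex.exp (-((σ : ℂ) * t))‖ ≤ 1 := by
          rw [Complex.norm_exp, Real.exp_le_one_iff]
          have : 0 ≤ σ * t := mul_nonneg (le_of_lt hσ) ht
          simpa using this
        rw [norm_mul]
        calc ‖g t‖ * ‖Complex.exp (-((σ : ℂ) * t))‖ ≤ ‖g t‖ * 1 := by gcongr
          _ ≤ 1 + |t| := by rw [mul_one]; exact hlin t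
          _ ≤ 1 + |T| + |t - T| := by
            have := abs_add_le T (t - T)
            rw [add_sub_cancel] at this; linarith
    · refine Eventually.of_forall fun t => ?_
      have : Continuous (fun σ : ℝ => g t * Complex.exp (-(σ * t)) * 𝓕 φ (t - T)) := by fun_prop
      simpa using (this.tendsto 0).mono_left nhdsWithin_le_nhds
  rw [tendsto_nhds_unique hlim2 hlim1]
  simp [H]

lemma convolution_tendsto_zero {g : ℝ → ℂ} (hm : Measurable g)
    (hneg : ∀ t < 0, g t = 0) (hlin : ∀ t, ‖g t‖ ≤ 1 + |t|) {G : ℂ → ℂ}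
    (hG : ContinuousOn G {s | 0 ≤ s.re})
    (hL : ∀ s : ℂ, 0 < s.re → ∫ t : ℝ, g t * Complex.exp (-(s * t)) = G s)
    {φ : ℝ → ℂ} (hφ : Continuous φ) (hφc : HasCompactSupport φ)
    (hK : Integrable (𝓕 φ)) (hK1 : Integrable (fun v => |v| * ‖𝓕 φ v‖)) :
    Tendsto (fun T : ℝ => ∫ v, g (v + T) * 𝓕 φ v) atTop (nhds 0) := by
  have h := (Real.tendsto_integral_exp_smul_cocompact
    (fun ξ : ℝ => φ ξ * G (2 * Real.pi * ξ * Complex.I))).comp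
    (tendsto_neg_atTop_atBot.mono_right atBot_le_cocompact)
  refine h.congr fun T => ?_
  have h1 := integral_add_right_eq_self (μ := volume) (fun t => g t * 𝓕 φ (t - T)) T
  simp only [add_sub_cancel_right] at h1
  rw [h1, convolution_identity hm hneg hlin hG hL hφ hφc hK hK1]
  simp [Circle.smul_def]

/-- If the Laplace transform of the slowly oscillating function `g` extends continuously to the
closed right half plane, then `g` tends to `0`. -/
theorem tauberian {g : ℝ → ℂ} (hm : Measurable g)
    (hneg : ∀ t < 0, g t = 0) (hlin : ∀ t, ‖g t‖ ≤ 1 + |t|)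
    (hosc : ∀ t t', 0 ≤ t → t ≤ t' → ‖g t' - g t‖ ≤ t' - t + 2 * Real.exp (-t)) {G : ℂ → ℂ}
    (hG : ContinuousOn G {s | 0 ≤ s.re})
    (hL : ∀ s : ℂ, 0 < s.re → ∫ t : ℝ, g t * Complex.exp (-(s * t)) = G s) :
    Tendsto g atTop (nhds 0) := by
  -- For `|v| ≤ T / 2` both points are at least `T / 2`; for larger `v` the bounded excess over `|v|`
  -- is absorbed in `4 |v| / T ≥ 2`.
  have hosc' : ∀ T v : ℝ, 0 < T →
      ‖g (v + T) - g T‖ ≤ (1 + 4 / T) * |v| + 2 * Real.exp (-(T / 2)) := by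
    intro T v hT
    have h0 : 0 ≤ 4 / T * |v| := by positivity
    rcases le_or_gt |v| (T / 2) with hv | hv
    · have hv' := abs_le.mp hv
      have key : ∀ a b : ℝ, T / 2 ≤ a → a ≤ b → ‖g b - g a‖ ≤ b - a + 2 * Real.exp (-(T / 2)) := by
        intro a b ha hab
        have := hosc a b (by linarith) hab
        have h2 : Real.exp (-a) ≤ Real.exp (-(T / 2)) := Real.exp_le_exp.mpr (by linarith)
        linarith
      rcases le_total 0 v with h | h
      · have := key T (v + T) (by linarith) (by linarith)
        rw [abs_of_nonneg h] at *
        linarith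
      · have := key (v + T) T (by linarith) (by linarith)
        rw [norm_sub_rev] at this
        rw [abs_of_nonpos h] at *
        linarith
    · have h1 : 2 ≤ 4 / T * |v| := by
        rw [div_mul_eq_mul_div, le_div_iff₀ hT]; linarith
      have hp := Real.exp_pos (-(T / 2))
      have he : ∀ a : ℝ, 0 ≤ a → Real.exp (-a) ≤ 1 := fun a ha => by simpa using ha
      rcases lt_or_ge (v + T) 0 with h | h
      · have := hlin T
        rw [hneg _ h, zero_sub, norm_neg]
        rw [abs_of_pos hT] at this
        rw [abs_of_neg (by linarith)] at *
        linarith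
      · rcases le_total 0 v with h' | h'
        · have := hosc T (v + T) hT.le (by linarith)
          have := he T hT.le
          rw [abs_of_nonneg h'] at *
          linarith
        · have h3 := hosc (v + T) T h (by linarith)
          have := he _ h
          rw [norm_sub_rev] at h3
          rw [abs_of_nonpos h'] at *
          linarith
  rw [Metric.tendsto_nhds]
  intro ε hε
  obtain ⟨φ, hφ, hφc, hK, hK1, hI, hε'⟩ := exists_fourier_kernel (ε := ε / 8) (by positivity)
  have hconv := convolution_tendsto_zero hm hneg hlin hG hL hφ hφc hK hK1
  have hexp : Tendsto (fun T : ℝ => 2 * Real.exp (-(T / 2)) * ∫ v, ‖𝓕 φ v‖) atTop (nhds 0) := by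
    have h1 : Tendsto (fun T : ℝ => Real.exp (-(T / 2))) atTop (nhds 0) :=
      Real.tendsto_exp_neg_atTop_nhds_zero.comp (tendsto_id.atTop_div_const two_pos)
    simpa using (h1.const_mul 2).mul_const (∫ v, ‖𝓕 φ v‖)
  filter_upwards [Metric.tendsto_nhds.mp hconv (ε / 4) (by positivity),
    Metric.tendsto_nhds.mp hexp (ε / 4) (by positivity), eventually_ge_atTop 4] with T h1 h2 hT
  have hT0 : 0 < T := by linarith
  rw [dist_zero_right] at *
  have hdom : Integrable (fun v : ℝ => ((1 + 4 / T) * |v| + 2 * Real.exp (-(T / 2))) * ‖𝓕 φ v‖) := by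
    refine ((hK1.const_mul (1 + 4 / T)).add (hK.norm.const_mul (2 * Real.exp (-(T / 2))))).congr
      (Eventually.of_forall fun v => ?_)
    simp only [Pi.add_apply]; ring
  have hd : ∀ v, ‖(g (v + T) - g T) * 𝓕 φ v‖ ≤
      ((1 + 4 / T) * |v| + 2 * Real.exp (-(T / 2))) * ‖𝓕 φ v‖ := fun v => by
    rw [norm_mul]; gcongr; exact hosc' T v hT0
  have hdi : Integrable (fun v => (g (v + T) - g T) * 𝓕 φ v) :=
    hdom.mono' ((show Measurable (fun v => g (v + T) - g T) by
      fun_prop).aestronglyMeasurable.mul hK.aestronglyMeasurable) (Eventually.of_forall hd)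
  have hsplit : ∫ v, g (v + T) * 𝓕 φ v = (∫ v, (g (v + T) - g T) * 𝓕 φ v) + g T := by
    have hgT : g T = ∫ v, g T * 𝓕 φ v := by rw [integral_const_mul, hI, mul_one]
    refine Eq.trans ?_ (congrArg _ hgT.symm)
    rw [← integral_add hdi (hK.const_mul _)]
    congr 1; ext v; ring
  have hb : ‖∫ v, (g (v + T) - g T) * 𝓕 φ v‖ ≤
      (1 + 4 / T) * (∫ v, |v| * ‖𝓕 φ v‖) + 2 * Real.exp (-(T / 2)) * ∫ v, ‖𝓕 φ v‖ := by
    refine (norm_integral_le_of_norm_le hdom (Eventually.of_forall hd)).trans_eq ?_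
    rw [← integral_const_mul, ← integral_const_mul,
      ← integral_add (hK1.const_mul _) (hK.norm.const_mul _)]
    congr 1; ext v; ring
  have h4 : 1 + 4 / T ≤ 2 := by
    have : 4 / T ≤ 1 := by rw [div_le_one hT0]; exact hT
    linarith
  have h5 : (1 + 4 / T) * (∫ v, |v| * ‖𝓕 φ v‖) ≤ 2 * (ε / 8) :=
    mul_le_mul h4 hε' (integral_nonneg fun v => by positivity) two_pos.le
  have h6 := (abs_lt.mp (Real.norm_eq_abs _ ▸ h2)).2
  have h7 : g T = (∫ v, g (v + T) * 𝓕 φ v) - ∫ v, (g (v + T) - g T) * 𝓕 φ v := by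
    rw [hsplit]; ring
  rw [h7]
  refine (norm_sub_le _ _).trans_lt ?_
  linarith

end Tauberian

/-! ### The Dirichlet series of the Möbius function on rough numbers -/

open Classical in
/-- `μ(n)` if all prime factors of `n` exceed `y`, and `0` otherwise. -/
noncomputable def roughMoebius (y : ℝ) (n : ℕ) : ℂ :=
  if ∀ p : ℕ, p ∈ n.primeFactors → y < (p : ℝ) then (ArithmeticFunction.moebius n : ℂ) else 0

lemma norm_roughMoebius_le (y : ℝ) (n : ℕ) : ‖roughMoebius y n‖ ≤ 1 := by
  unfold roughMoebius
  split_ifs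
  · rw [Complex.norm_intCast]
    exact_mod_cast ArithmeticFunction.abs_moebius_le_one
  · simp

lemma roughMoebius_mul (y : ℝ) {m n : ℕ} (h : m.Coprime n) :
    roughMoebius y (m * n) = roughMoebius y m * roughMoebius y n := by
  have hmul := ArithmeticFunction.isMultiplicative_moebius.map_mul_of_coprime h
  simp only [roughMoebius, h.primeFactors_mul, Finset.mem_union, or_imp, forall_and, hmul]
  split_ifs <;> simp_all

lemma hasProd_roughMoebius (y : ℝ) {s : ℂ} (hs : 1 < s.re) :
    HasProd (fun p : Nat.Primes => if y < (p : ℝ) then 1 - (p : ℂ) ^ (-s) else 1)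
      (LSeries (roughMoebius y) s) := by
  have hsum : LSeriesSummable (roughMoebius y) s :=
    LSeriesSummable_of_bounded_of_one_lt_re (fun n _ => norm_roughMoebius_le y n) hs
  have h := EulerProduct.eulerProduct_hasProd (f := LSeries.term (roughMoebius y) s)
    (by simp [LSeries.term, roughMoebius]) (by
      intro m n hmn
      rcases eq_or_ne m 0 with rfl | hm
      · simp
      rcases eq_or_ne n 0 with rfl | hn
      · simp
      rw [LSeries.term_of_ne_zero (mul_ne_zero hm hn), LSeries.term_of_ne_zero hm,
        LSeries.term_of_ne_zero hn, roughMoebius_mul y hmn, Nat.cast_mul,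
        Complex.natCast_mul_natCast_cpow, mul_div_mul_comm])
    hsum.norm (by simp)
  change HasProd _ (∑' n, LSeries.term (roughMoebius y) s n)
  convert h using 2 with p
  have hp := p.2
  have h0 : ∀ e ∉ Finset.range 2, LSeries.term (roughMoebius y) s ((p : ℕ) ^ e) = 0 := by
    intro e he
    have he2 : 2 ≤ e := Nat.le_of_not_lt fun h => he (Finset.mem_range.mpr h)
    rw [LSeries.term_of_ne_zero (pow_ne_zero _ hp.ne_zero)]
    have hμ : ArithmeticFunction.moebius ((p : ℕ) ^ e) = 0 := by
      rw [ArithmeticFunction.moebius_apply_prime_pow hp (by omega), if_neg (by omega)]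
    simp only [roughMoebius, hμ, Int.cast_zero, ite_self, zero_div]
  rw [tsum_eq_sum h0, Finset.sum_range_succ, Finset.sum_range_one, pow_zero, pow_one,
    LSeries.term_of_ne_zero one_ne_zero, LSeries.term_of_ne_zero hp.ne_zero]
  simp only [roughMoebius, hp.primeFactors, ArithmeticFunction.moebius_apply_prime hp]
  split_ifs <;> simp_all [Complex.cpow_neg, div_eq_mul_inv, sub_eq_add_neg]

/-- The primes up to `y`. -/
noncomputable def smallPrimes (y : ℝ) : Finset Nat.Primes :=
  (Finset.range (⌊y⌋₊ + 1)).subtype Nat.Prime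

lemma mem_smallPrimes {y : ℝ} (hy : 0 ≤ y) (p : Nat.Primes) :
    p ∈ smallPrimes y ↔ ¬ y < (p : ℝ) := by
  refine Finset.mem_subtype.trans ?_
  rw [Finset.mem_range, Nat.lt_add_one_iff, Nat.le_floor_iff hy, not_lt]

/-- The Euler factors at the primes up to `y`. -/
noncomputable def smoothFactor (y : ℝ) (s : ℂ) : ℂ :=
  ∏ p ∈ smallPrimes y, (1 - (p : ℂ) ^ (-s))

/-- The Dirichlet series of `roughMoebius y` is `1 / (ζ(s) ∏_{p ≤ y} (1 - p^(-s)))`. Multiplying its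
Euler product by the missing factors gives the case `y = 1`, which is the series of `μ`. -/
lemma LSeries_roughMoebius_mul (y : ℝ) (hy : 1 ≤ y) {s : ℂ} (hs : 1 < s.re) :
    LSeries (roughMoebius y) s * (smoothFactor y s * riemannZeta s) = 1 := by
  have h1 := hasProd_roughMoebius y hs
  have h2 : HasProd (fun p : Nat.Primes => if y < (p : ℝ) then 1 else 1 - (p : ℂ) ^ (-s))
      (smoothFactor y s) := by
    have hmem := mem_smallPrimes (zero_le_one.trans hy)
    have := hasProd_prod_of_ne_finset_one (L := SummationFilter.unconditional _)
      (f := fun p : Nat.Primes => if y < (p : ℝ) then 1 else 1 - (p : ℂ) ^ (-s))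
      (s := smallPrimes y)
      (fun p hp => by rw [hmem, not_not] at hp; simp [hp])
    rwa [Finset.prod_congr rfl (fun p hp => if_neg ((hmem p).mp hp))] at this
  have h3 := hasProd_roughMoebius 1 hs
  have h4 : LSeries (roughMoebius y) s * smoothFactor y s = LSeries (roughMoebius 1) s := by
    refine (h1.mul h2).unique ?_
    convert h3 using 2 with p
    have hp1 : (1 : ℝ) < (p : ℕ) := by exact_mod_cast p.2.one_lt
    simp only [if_pos hp1]
    split_ifs
    · exact mul_one _
    · exact one_mul _
  have h5 : LSeries (roughMoebius 1) s = LSeries (fun n => (ArithmeticFunction.moebius n : ℂ)) s := by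
    refine LSeries_congr (fun {n} _ => ?_) s
    simp only [roughMoebius]
    rw [if_pos]
    intro p hp
    exact_mod_cast (Nat.prime_of_mem_primeFactors hp).one_lt
  have h6 := ArithmeticFunction.LSeries_zeta_mul_Lseries_moebius hs
  rw [ArithmeticFunction.LSeries_zeta_eq_riemannZeta hs] at h6
  rw [← mul_assoc, h4, h5, mul_comm]
  exact h6

/-- The entire function `s ζ(1 + s)`, with the removable singularity at `0` filled in. -/
noncomputable def zetaReg : ℂ → ℂ := Function.update (fun s => s * riemannZeta (1 + s)) 0 1

lemma continuous_zetaReg : Continuous zetaReg := by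
  rw [continuous_iff_continuousAt]
  intro s
  rcases eq_or_ne s 0 with rfl | hs
  · rw [zetaReg, continuousAt_update_same]
    have h : Tendsto (fun s : ℂ => 1 + s) (nhdsWithin 0 {0}ᶜ) (nhdsWithin 1 {1}ᶜ) := by
      refine tendsto_nhdsWithin_iff.mpr ⟨?_, ?_⟩
      · have : Continuous (fun s : ℂ => 1 + s) := by fun_prop
        simpa using (this.tendsto 0).mono_left nhdsWithin_le_nhds
      · exact eventually_nhdsWithin_of_forall fun s hs => by simpa using hs
    simpa [Function.comp_def] using riemannZeta_residue_one.comp h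
  · rw [zetaReg, continuousAt_update_of_ne hs]
    refine continuousAt_id.mul ?_
    have : ContinuousAt riemannZeta (1 + s) :=
      (differentiableAt_riemannZeta (by simpa using hs)).continuousAt
    exact ContinuousAt.comp (f := fun s : ℂ => 1 + s) this (by fun_prop)

lemma zetaReg_ne_zero {s : ℂ} (hs : 0 ≤ s.re) : zetaReg s ≠ 0 := by
  rcases eq_or_ne s 0 with rfl | h
  · simp [zetaReg]
  · rw [zetaReg, Function.update_of_ne h]
    exact mul_ne_zero h (riemannZeta_ne_zero_of_one_le_re (by simpa using hs))

lemma continuous_smoothFactor (y : ℝ) : Continuous (smoothFactor y) := by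
  unfold smoothFactor
  refine continuous_finsetProd _ fun p _ => continuous_const.sub ?_
  exact continuous_neg.const_cpow (Or.inl (by exact_mod_cast p.2.ne_zero))

lemma smoothFactor_ne_zero (y : ℝ) {s : ℂ} (hs : 0 < s.re) : smoothFactor y s ≠ 0 := by
  refine Finset.prod_ne_zero_iff.mpr fun p _ h => ?_
  have h1 : ‖((p : ℕ) : ℂ) ^ (-s)‖ < 1 := by
    rw [Complex.norm_natCast_cpow_of_pos p.2.pos]
    exact Real.rpow_lt_one_of_one_lt_of_neg (by exact_mod_cast p.2.one_lt) (by simpa using hs)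
  rw [← sub_eq_zero.mp h] at h1
  simp at h1

/-- The continuous extension to `0 ≤ Re s` of the Laplace transform of `roughSum y`
(see `laplace_roughSum`). -/
noncomputable def laplaceExt (y : ℝ) (s : ℂ) : ℂ := (zetaReg s * smoothFactor y (1 + s))⁻¹

lemma continuousOn_laplaceExt (y : ℝ) : ContinuousOn (laplaceExt y) {s | 0 ≤ s.re} := by
  refine ContinuousOn.inv₀ (Continuous.continuousOn ?_) fun s hs => ?_
  · exact continuous_zetaReg.mul ((continuous_smoothFactor y).comp (by fun_prop))
  · have hs' : 0 ≤ s.re := hs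
    exact mul_ne_zero (zetaReg_ne_zero hs) (smoothFactor_ne_zero y (by simp; linarith))

/-! ### The partial sums in a logarithmic variable -/

/-- The partial sum of `μ(n)/n` over the `y`-rough `n ≤ exp t`; it vanishes for `t < 0`. -/
noncomputable def roughSum (y t : ℝ) : ℂ :=
  ∑ k ∈ Finset.Icc 1 ⌊Real.exp t⌋₊, roughMoebius y k / k

lemma norm_term_le (y : ℝ) (k : ℕ) : ‖roughMoebius y k / k‖ ≤ (k : ℝ)⁻¹ := by
  rw [norm_div, Complex.norm_natCast, div_eq_mul_inv]
  exact mul_le_of_le_one_left (by positivity) (norm_roughMoebius_le y k)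

lemma norm_sum_term_le (y : ℝ) (n : ℕ) :
    ∑ k ∈ Finset.Icc 1 n, ‖roughMoebius y k / k‖ ≤ 1 + Real.log n := by
  refine le_trans (Finset.sum_le_sum fun k _ => norm_term_le y k) ?_
  have := harmonic_le_one_add_log n
  rw [harmonic_eq_sum_Icc] at this
  push_cast at this
  exact this

lemma roughSum_of_neg (y : ℝ) {t : ℝ} (ht : t < 0) : roughSum y t = 0 := by
  have : ⌊Real.exp t⌋₊ = 0 := Nat.floor_eq_zero.mpr (by simpa using ht)
  simp [roughSum, this]

lemma norm_roughSum_le (y t : ℝ) : ‖roughSum y t‖ ≤ 1 + |t| := by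
  rcases lt_or_ge t 0 with ht | ht
  · rw [roughSum_of_neg y ht]; simp; positivity
  · refine (norm_sum_le _ _).trans ((norm_sum_term_le y _).trans ?_)
    have h1 : 1 ≤ ⌊Real.exp t⌋₊ := Nat.le_floor (by simpa using ht)
    have h2 : Real.log ⌊Real.exp t⌋₊ ≤ Real.log (Real.exp t) :=
      Real.log_le_log (by exact_mod_cast h1) (Nat.floor_le (Real.exp_pos t).le)
    rw [Real.log_exp] at h2
    rw [abs_of_nonneg ht]; linarith

lemma measurable_roughSum (y : ℝ) : Measurable (roughSum y) := by
  have : Measurable (fun n : ℕ => ∑ k ∈ Finset.Icc 1 n, roughMoebius y k / k) :=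
    measurable_from_top
  exact this.comp (Nat.measurable_floor.comp Real.measurable_exp)

lemma sum_inv_Ioc_le_log {m n : ℕ} (hm : 1 ≤ m) (hmn : m ≤ n) :
    ∑ k ∈ Finset.Ioc m n, (k : ℝ)⁻¹ ≤ Real.log n - Real.log m := by
  induction n, hmn using Nat.le_induction with
  | base => simp
  | succ n hmn ih =>
    rw [Finset.sum_Ioc_succ_top hmn]
    have hn : (0 : ℝ) < n := by exact_mod_cast hm.trans hmn
    have h1 := Real.one_sub_inv_le_log_of_pos (x := ((n + 1 : ℕ) : ℝ) / n) (by positivity)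
    rw [Real.log_div (by positivity) hn.ne', inv_div] at h1
    have h2 : 1 - (n : ℝ) / ((n + 1 : ℕ) : ℝ) = (((n + 1 : ℕ) : ℝ))⁻¹ := by
      push_cast; field_simp; ring
    linarith

lemma roughSum_osc (y t t' : ℝ) (ht : 0 ≤ t) (htt : t ≤ t') :
    ‖roughSum y t' - roughSum y t‖ ≤ t' - t + 2 * Real.exp (-t) := by
  have h1 : 1 ≤ Real.exp t := by simpa using ht
  set m := ⌊Real.exp t⌋₊ with hm
  set n := ⌊Real.exp t'⌋₊ with hn
  have hm1 : 1 ≤ m := Nat.le_floor (by simpa using ht)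
  have hmn : m ≤ n := Nat.floor_mono (Real.exp_le_exp.mpr htt)
  have hm0 : (1 : ℝ) ≤ m := by exact_mod_cast hm1
  have hsub : roughSum y t' - roughSum y t = ∑ k ∈ Finset.Ioc m n, roughMoebius y k / k := by
    rw [roughSum, roughSum, ← hm, ← hn, sub_eq_iff_eq_add']
    have hIcc : ∀ N : ℕ, Finset.Icc 1 N = Finset.Ioc 0 N := fun N => rfl
    rw [hIcc, hIcc, Finset.sum_Ioc_consecutive _ (Nat.zero_le m) hmn]
  have hlogn : Real.log n ≤ t' := by
    rw [← Real.log_exp t']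
    exact Real.log_le_log (by exact_mod_cast hm1.trans hmn) (Nat.floor_le (Real.exp_pos _).le)
  -- `e^t - 1 < m` and `1 ≤ m` give `e^t ≤ 2 m`, so passing from `e^t` to `m` costs at most `2 e^(-t)`.
  have hlogm : t - 2 * Real.exp (-t) ≤ Real.log m := by
    have h2 : Real.exp t < m + 1 := Nat.lt_floor_add_one _
    have h3 := Real.one_sub_inv_le_log_of_pos (x := (m : ℝ) / Real.exp t) (by positivity)
    rw [Real.log_div (by positivity) (by positivity), Real.log_exp, inv_div] at h3
    have h4 : Real.exp t / m - 1 ≤ 2 * Real.exp (-t) := by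
      rw [Real.exp_neg, ← div_eq_mul_inv, div_sub_one (by positivity),
        div_le_div_iff₀ (by positivity) (by positivity)]
      nlinarith
    linarith
  rw [hsub]
  refine (norm_sum_le _ _).trans ((Finset.sum_le_sum fun k _ => norm_term_le y k).trans ?_)
  have := sum_inv_Ioc_le_log hm1 hmn
  linarith

/-- Partial summation, followed by the substitution `u = exp t`. -/
lemma laplace_roughSum (y : ℝ) (hy : 1 ≤ y) (s : ℂ) (hs : 0 < s.re) :
    ∫ t : ℝ, roughSum y t * Complex.exp (-(s * t)) = laplaceExt y s := by
  have hs0 : s ≠ 0 := by rintro rfl; simp at hs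
  have hO' : (fun n : ℕ => ∑ k ∈ Finset.Icc 1 n, ‖roughMoebius y k / k‖)
      =O[atTop] fun n => (n : ℝ) ^ (s.re / 2) := by
    have h1 : (fun x : ℝ => 1 + Real.log x) =O[atTop] fun x => x ^ (s.re / 2) :=
      (Asymptotics.isLittleO_const_left.mpr (Or.inr (tendsto_norm_atTop_atTop.comp
        (tendsto_rpow_atTop (half_pos hs))))).isBigO.add
        (isLittleO_log_rpow_atTop (half_pos hs)).isBigO
    refine Asymptotics.IsBigO.trans (Asymptotics.IsBigO.of_bound 1 ?_)
      (h1.comp_tendsto tendsto_natCast_atTop_atTop)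
    refine Eventually.of_forall fun n => ?_
    have h0 : 0 ≤ ∑ k ∈ Finset.Icc 1 n, ‖roughMoebius y k / k‖ :=
      Finset.sum_nonneg fun k _ => norm_nonneg _
    have h2 := norm_sum_term_le y n
    rw [one_mul, Real.norm_of_nonneg h0, Function.comp_apply, Real.norm_of_nonneg (h0.trans h2)]
    exact h2
  have hO : (fun n : ℕ => ∑ k ∈ Finset.Icc 1 n, roughMoebius y k / k)
      =O[atTop] fun n => (n : ℝ) ^ (s.re / 2) :=
    Asymptotics.IsBigO.trans (Asymptotics.IsBigO.of_bound 1 (Eventually.of_forall fun n => by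
      rw [one_mul]
      exact (norm_sum_le _ _).trans (le_abs_self _))) hO'
  have hsum : LSeriesSummable (fun k : ℕ => roughMoebius y k / k) s :=
    LSeriesSummable_of_sum_norm_bigO hO' (by positivity) (by linarith)
  have h1 := LSeries_eq_mul_integral (fun k : ℕ => roughMoebius y k / k) (r := s.re / 2)
    (by positivity) (by linarith) hsum hO
  have h2 : LSeries (fun k : ℕ => roughMoebius y k / k) s = LSeries (roughMoebius y) (1 + s) := by
    refine tsum_congr fun n => ?_
    rcases eq_or_ne n 0 with rfl | hn
    · simp
    · rw [LSeries.term_of_ne_zero hn, LSeries.term_of_ne_zero hn,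
        Complex.cpow_add _ _ (by exact_mod_cast hn), Complex.cpow_one, div_div]
  have h3 : ∫ t : ℝ, roughSum y t * Complex.exp (-(s * t)) =
      ∫ t in Set.Ioi (1 : ℝ), (∑ k ∈ Finset.Icc 1 ⌊t⌋₊, roughMoebius y k / k) *
        (t : ℂ) ^ (-(s + 1)) := by
    rw [← Real.exp_zero, ← MeasureTheory.integral_comp_exp_Ioi,
      ← MeasureTheory.integral_Ici_eq_integral_Ioi,
      ← MeasureTheory.setIntegral_eq_integral_of_forall_compl_eq_zero (s := Set.Ici (0 : ℝ))
      (fun t ht => by rw [roughSum_of_neg y (by simpa using ht), zero_mul])]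
    congr 1; ext t
    rw [Complex.real_smul, mul_left_comm, roughSum]
    congr 1
    rw [Complex.cpow_def_of_ne_zero (by exact_mod_cast (Real.exp_pos t).ne'),
      ← Complex.ofReal_log (Real.exp_pos t).le, Real.log_exp, Complex.ofReal_exp,
      ← Complex.exp_add]
    congr 1; ring
  rw [← h3, h2] at h1
  have h4 := LSeries_roughMoebius_mul y hy (s := 1 + s) (by simpa using hs)
  rw [laplaceExt, zetaReg, Function.update_of_ne hs0]
  refine eq_inv_of_mul_eq_one_left ?_
  rw [h1] at h4
  linear_combination h4

/-! ### Conclusion -/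

theorem moebius_div_sum_rough_tendsto_zero (y : ℝ) (hy : 1 ≤ y) :
    Tendsto
      (fun x : ℝ =>
        ∑ n ∈ (Finset.Icc 1 ⌊x⌋₊).filter (fun n => ∀ p : ℕ, p ∈ n.primeFactors → y < (p : ℝ)),
          (ArithmeticFunction.moebius n : ℝ) / n)
      atTop (nhds 0) := by
  have h := (tauberian (measurable_roughSum y) (fun t ht => roughSum_of_neg y ht)
    (norm_roughSum_le y) (roughSum_osc y) (continuousOn_laplaceExt y)
    (laplace_roughSum y hy)).comp Real.tendsto_log_atTop
  have h' := (Complex.continuous_re.tendsto 0).comp h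
  rw [Complex.zero_re] at h'
  refine h'.congr' ?_
  filter_upwards [eventually_gt_atTop 0] with x hx
  simp only [Function.comp_apply, roughSum, Real.exp_log hx, Complex.re_sum, Finset.sum_filter]
  refine Finset.sum_congr rfl fun n _ => ?_
  unfold roughMoebius
  split_ifs
  · rw [Complex.div_natCast_re, Complex.intCast_re]
  · simp
end
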